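/- arXiv:1812.03345 — 3 statements merged into one kernel-verified Lean document; each statement's English description precedes it below -/
import Mathlib

section
/- Let n ≥ 1 and let λ = (λ_1 ≥ λ_2 ≥ … ≥ λ_n ≥ 0) be a partition with at most n parts. Then the number of semistandard Young tableaux of shape λ with all entries in {1, 2, …, n} equals the product over all pairs 1 ≤ i < j ≤ n of (λ_i − λ_j + j − i)/(j − i). -/
/-- `T : ℕ → ℕ → ℕ` (rows and columns indexed from `0`) is a semistandard Young
tableau of shape `lam` (a partition with at most `n` parts) with entries in `{1, …, n}`:
entries vanish outside the diagram, each entry in the diagram is in `{1, …, n}`, rows are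
weakly increasing and columns are strictly increasing. -/
def IsSSYT (n : ℕ) (lam : Fin n → ℕ) (T : ℕ → ℕ → ℕ) : Prop :=
  (∀ i j, T i j ≠ 0 → ∃ h : i < n, j < lam ⟨i, h⟩) ∧
  (∀ (i : Fin n) (j : ℕ), j < lam i → 1 ≤ T i.1 j ∧ T i.1 j ≤ n) ∧
  (∀ (i : Fin n) (j₁ j₂ : ℕ), j₁ ≤ j₂ → j₂ < lam i → T i.1 j₁ ≤ T i.1 j₂) ∧
  (∀ (i₁ i₂ : Fin n) (j : ℕ), i₁ < i₂ → j < lam i₂ → T i₁.1 j < T i₂.1 j)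

namespace SSYTCount

open Matrix Finset

/-- Matrix of binomial coefficients attached to an integer sequence. -/
noncomputable def binMat (n : ℕ) (y : Fin n → ℤ) : Matrix (Fin n) (Fin n) ℤ :=
  Matrix.of fun i j => Ring.choose (y i) (j : ℕ)

lemma choose_step (x : ℤ) (k : ℕ) :
    Ring.choose (x + 1) (k + 1) = Ring.choose x k + Ring.choose x (k + 1) :=
  Ring.choose_succ_succ x k

lemma sum_choose (i : ℤ) (k a b : ℕ) (hab : a ≤ b) :
    ∑ m ∈ Finset.Icc a b, Ring.choose (i - (m : ℤ)) k =
      Ring.choose (i + 1 - (a : ℤ)) (k + 1) - Ring.choose (i - (b : ℤ)) (k + 1) := by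
  induction b, hab using Nat.le_induction with
  | base =>
    have := choose_step (i - a) k
    simp only [Finset.Icc_self, Finset.sum_singleton]
    rw [show i + 1 - (a : ℤ) = i - a + 1 by ring, this]; ring
  | succ b hb ih =>
    rw [← Finset.insert_Icc_right_eq_Icc_add_one (by omega), Finset.sum_insert (by simp), ih]
    have := choose_step (i - (b + 1 : ℕ)) k
    rw [show i - ((b + 1 : ℕ) : ℤ) + 1 = i - b by push_cast; ring] at this
    rw [this]; ring

lemma det_binMat_succ (n : ℕ) (y : Fin (n + 1) → ℤ) :
    (binMat (n + 1) y).det =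
      (Matrix.of fun i j : Fin n => Ring.choose (y i.succ) ((j : ℕ) + 1)
        - Ring.choose (y i.castSucc) ((j : ℕ) + 1)).det := by
  let B : Matrix (Fin (n + 1)) (Fin (n + 1)) ℤ := Matrix.of
    (Fin.cases (fun j => binMat (n + 1) y 0 j)
      (fun i j => binMat (n + 1) y i.succ j - binMat (n + 1) y i.castSucc j))
  have h : (binMat (n + 1) y).det = B.det := by
    apply det_eq_of_forall_row_eq_smul_add_pred (fun _ => 1)
    · intro j; rfl
    · intro i j
      simp [B]
  rw [h, det_succ_column_zero, Fin.sum_univ_succ, Finset.sum_eq_zero]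
  · simp only [B, binMat, of_apply, Fin.val_zero, Fin.cases_zero, Ring.choose_zero_right]
    simp only [pow_zero, mul_one, one_mul, add_zero]
    congr 1
  · intro i _
    simp [B, binMat]

lemma sum_det (n : ℕ) (lam : Fin (n + 1) → ℕ) (hlam : Antitone lam) :
    ∑ mu ∈ Fintype.piFinset (fun i : Fin n => Finset.Icc (lam i.succ) (lam i.castSucc)),
      (binMat n (fun i => (i : ℤ) - mu i)).det =
    (binMat (n + 1) (fun i => (i : ℤ) - lam i)).det := by
  rw [det_binMat_succ]
  have := (detRowAlternating (R := ℤ) (n := Fin n)).toMultilinearMap.map_sum_finset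
    (fun i (m : ℕ) => fun j : Fin n => Ring.choose ((i : ℤ) - (m : ℤ)) (j : ℕ))
    (fun i : Fin n => Finset.Icc (lam i.succ) (lam i.castSucc))
  refine Eq.trans this.symm ?_
  change Matrix.det _ = _
  congr 1
  ext i j
  rw [Finset.sum_apply, sum_choose _ _ _ _ (hlam (Fin.castSucc_lt_succ).le)]
  simp

lemma det_eq_prod (n : ℕ) (y : Fin n → ℤ) :
    (∏ j : Fin n, ((j : ℕ).factorial : ℤ)) * (binMat n y).det =
      ∏ i : Fin n, ∏ j ∈ Finset.Ioi i, (y j - y i) := by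
  rw [← det_vandermonde, det_eval_matrixOfPolynomials_eq_det_vandermonde y
      (fun i => descPochhammer ℤ i)
      (fun i => descPochhammer_natDegree ℤ i)
      (fun i => monic_descPochhammer ℤ i)]
  rw [← det_mul_row (fun (i : Fin n) => ((Nat.factorial (i : ℕ)) : ℤ))]
  congr 1
  ext i j
  have := Ring.descPochhammer_eq_factorial_smul_choose (y i) (j : ℕ)
  simp only [of_apply, binMat]
  rw [← Polynomial.eval_eq_smeval] at this
  simpa using this.symm

lemma prod_sub (n : ℕ) :
    ∏ i : Fin n, ∏ j ∈ Finset.Ioi i, ((j : ℤ) - (i : ℤ)) =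
      ∏ j : Fin n, ((j : ℕ).factorial : ℤ) := by
  cases n with
  | zero => simp
  | succ n =>
    have := det_vandermonde_id_eq_superFactorial (R := ℤ) n
    rw [det_vandermonde] at this
    rw [this, Fin.prod_univ_eq_prod_range (fun i => (i.factorial : ℤ))]
    rw [← Nat.prod_range_succ_factorial]; push_cast; rfl

lemma weyl_eq (n : ℕ) (lam : Fin n → ℕ) :
    ∏ p ∈ Finset.univ.filter (fun p : Fin n × Fin n => p.1 < p.2),
        ((lam p.1 : ℚ) - (lam p.2 : ℚ) + (p.2.1 : ℚ) - (p.1.1 : ℚ)) /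
          ((p.2.1 : ℚ) - (p.1.1 : ℚ)) =
    (((binMat n (fun i => (i : ℤ) - lam i)).det : ℤ) : ℚ) := by
  have h1 := det_eq_prod n (fun i => (i : ℤ) - lam i)
  have h2 := prod_sub n
  rw [Finset.prod_finset_product _ Finset.univ (fun i => Finset.Ioi i) (by simp)]
  simp only [Finset.prod_div_distrib]
  have h2' := congrArg (Int.cast : ℤ → ℚ) h2
  have h1' := congrArg (Int.cast : ℤ → ℚ) h1
  rw [Int.cast_mul] at h1'
  simp only [Int.cast_prod, Int.cast_sub, Int.cast_natCast] at h1' h2'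
  have hne : (∏ j : Fin n, ((j : ℕ).factorial : ℚ)) ≠ 0 :=
    Finset.prod_ne_zero_iff.2 fun i _ => by exact_mod_cast Nat.factorial_ne_zero _
  rw [h2', div_eq_iff hne, mul_comm, h1']
  refine Finset.prod_congr rfl fun i _ => Finset.prod_congr rfl fun j _ => ?_
  ring

/-! ### Tableaux with shape indexed by `ℕ` -/

/-- Extension of a finite sequence by zero. -/
def ext0 (n : ℕ) (lam : Fin n → ℕ) (i : ℕ) : ℕ := if h : i < n then lam ⟨i, h⟩ else 0

/-- Reformulation of `IsSSYT`. -/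
structure Tab (n : ℕ) (L : ℕ → ℕ) (T : ℕ → ℕ → ℕ) : Prop where
  supp : ∀ i j, T i j ≠ 0 ↔ j < L i
  bdd : ∀ i j, T i j ≤ n
  row : ∀ i j₁ j₂, j₁ ≤ j₂ → j₂ < L i → T i j₁ ≤ T i j₂
  col : ∀ i₁ i₂ j, i₁ < i₂ → j < L i₂ → T i₁ j < T i₂ j

lemma lt_ext0 (n : ℕ) (lam : Fin n → ℕ) (i j : ℕ) :
    j < ext0 n lam i ↔ ∃ h : i < n, j < lam ⟨i, h⟩ := by
  unfold ext0; split_ifs with h <;> simp [h]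

lemma isSSYT_iff (n : ℕ) (lam : Fin n → ℕ) (hlam : Antitone lam) (T : ℕ → ℕ → ℕ) :
    IsSSYT n lam T ↔ Tab n (ext0 n lam) T := by
  constructor
  · rintro ⟨h1, h2, h3, h4⟩
    refine ⟨?_, ?_, ?_, ?_⟩
    · intro i j
      rw [lt_ext0]
      refine ⟨h1 i j, ?_⟩
      rintro ⟨h, hj⟩
      have := (h2 ⟨i, h⟩ j hj).1
      simp only at this
      omega
    · intro i j
      by_cases h : T i j = 0
      · omega
      · obtain ⟨hi, hj⟩ := h1 i j h
        exact (h2 ⟨i, hi⟩ j hj).2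
    · intro i j₁ j₂ h hj
      obtain ⟨hi, hj⟩ := (lt_ext0 _ _ _ _).1 hj
      exact h3 ⟨i, hi⟩ j₁ j₂ h hj
    · intro i₁ i₂ j h hj
      obtain ⟨hi, hj⟩ := (lt_ext0 _ _ _ _).1 hj
      exact h4 ⟨i₁, by omega⟩ ⟨i₂, hi⟩ j h hj
  · rintro ⟨h1, h2, h3, h4⟩
    refine ⟨?_, ?_, ?_, ?_⟩
    · intro i j h
      exact (lt_ext0 _ _ _ _).1 ((h1 i j).1 h)
    · intro i j hj
      have := (h1 i j).2 ((lt_ext0 _ _ _ _).2 ⟨i.2, hj⟩)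
      exact ⟨by omega, h2 _ _⟩
    · intro i j₁ j₂ h hj
      exact h3 _ _ _ h ((lt_ext0 _ _ _ _).2 ⟨i.2, hj⟩)
    · intro i₁ i₂ j h hj
      exact h4 _ _ _ h ((lt_ext0 _ _ _ _).2 ⟨i₂.2, hj⟩)

/-- Remove the largest entry. -/
def res (n : ℕ) (T : ℕ → ℕ → ℕ) (i j : ℕ) : ℕ := if T i j = n + 1 then 0 else T i j

/-- Fill the missing boxes with the largest entry. -/
def fill (n : ℕ) (L : ℕ → ℕ) (T : ℕ → ℕ → ℕ) (i j : ℕ) : ℕ :=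
  if T i j = 0 ∧ j < L i then n + 1 else T i j

lemma Tab.ge {n : ℕ} {L : ℕ → ℕ} {T : ℕ → ℕ → ℕ} (hT : Tab n L T) (hL : Antitone L)
    (i j : ℕ) (h : j < L i) : i + 1 ≤ T i j := by
  induction i with
  | zero => have := (hT.supp 0 j).2 h; omega
  | succ i ih =>
    have h1 := ih (lt_of_lt_of_le h (hL (Nat.le_succ i)))
    have := hT.col i (i + 1) j (by omega) h
    omega

lemma res_tab {n : ℕ} {L : ℕ → ℕ} {T : ℕ → ℕ → ℕ} (hT : Tab (n + 1) L T) (hL : Antitone L) :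
    ∃ M : ℕ → ℕ, (∀ i, n ≤ i → M i = 0) ∧ (∀ i, M i ≤ L i) ∧ (∀ i, L (i + 1) ≤ M i) ∧
      Tab n M (res n T) := by
  have key : ∀ i, ∃ m, ∀ j, j < m ↔ j < L i ∧ T i j ≠ n + 1 := by
    intro i
    have hex : ∃ m, ¬ (m < L i ∧ T i m ≠ n + 1) := ⟨L i, by simp⟩
    refine ⟨Nat.find hex, fun j => ?_⟩
    rw [Nat.lt_find_iff]
    constructor
    · intro h; exact not_not.1 (h j le_rfl)
    · rintro ⟨h1, h2⟩ m hm
      have := hT.row i m j hm h1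
      have := hT.bdd i j
      rw [not_not]
      exact ⟨by omega, by omega⟩
  choose M hM using key
  refine ⟨M, ?_, ?_, ?_, ?_, ?_, ?_, ?_⟩
  · intro i hi
    by_contra h
    obtain ⟨h1, h2⟩ := (hM i 0).1 (by omega)
    have := hT.ge hL i 0 h1
    have := hT.bdd i 0
    omega
  · intro i
    by_contra! h
    have := ((hM i _).1 h).1
    omega
  · intro i
    by_contra! h
    have := hT.col i (i + 1) _ (by omega) h
    have := hT.bdd (i + 1) (M i)
    have h3 := (hM i (M i)).2 ⟨lt_of_lt_of_le h (hL (Nat.le_succ i)), by omega⟩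
    omega
  · intro i j
    rw [hM, ← hT.supp]
    unfold res
    split_ifs with h <;> simp [h]
  · intro i j
    have := hT.bdd i j
    unfold res
    split_ifs with h <;> omega
  · intro i j₁ j₂ h hj
    have h1 := (hM _ _).1 hj
    have h2 := (hM i j₁).1 (by omega)
    have := hT.row i j₁ j₂ h h1.1
    simp only [res, if_neg h1.2, if_neg h2.2]
    exact this
  · intro i₁ i₂ j h hj
    have h1 := (hM _ _).1 hj
    have := hT.col i₁ i₂ j h h1.1
    have := hT.bdd i₂ j
    simp only [res, if_neg h1.2]
    split_ifs <;> omega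

lemma fill_tab {n : ℕ} {L M : ℕ → ℕ} {T : ℕ → ℕ → ℕ} (hT : Tab n M T) (hL : Antitone L)
    (h1 : ∀ i, M i ≤ L i) (h2 : ∀ i, L (i + 1) ≤ M i) : Tab (n + 1) L (fill n L T) := by
  refine ⟨?_, ?_, ?_, ?_⟩
  · intro i j
    have := hT.supp i j
    have := h1 i
    unfold fill
    split_ifs with h
    · simp [h.2]
    · constructor
      · intro h'; have := this; omega
      · intro h' h''; exact h ⟨h'', h'⟩
  · intro i j
    have := hT.bdd i j
    unfold fill
    split_ifs with h <;> omega
  · intro i j₁ j₂ h hj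
    have a1 := hT.supp i j₁
    have a2 := hT.supp i j₂
    have a3 := hT.row i j₁ j₂ h
    have a4 := hT.bdd i j₁
    unfold fill
    split_ifs <;> omega
  · intro i₁ i₂ j h hj
    have b1 : L i₂ ≤ L (i₁ + 1) := hL h
    have b2 := h2 i₁
    have a1 := hT.supp i₁ j
    have a2 := hT.supp i₂ j
    have a3 := hT.col i₁ i₂ j h
    have a4 := hT.bdd i₁ j
    unfold fill
    split_ifs <;> omega

lemma fill_res {n : ℕ} {L : ℕ → ℕ} {T : ℕ → ℕ → ℕ} (hT : Tab (n + 1) L T) :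
    fill n L (res n T) = T := by
  funext i j
  have a1 := hT.supp i j
  unfold fill res
  split_ifs <;> omega

lemma res_fill {n : ℕ} {L M : ℕ → ℕ} {T : ℕ → ℕ → ℕ} (hT : Tab n M T) :
    res n (fill n L T) = T := by
  funext i j
  have a1 := hT.bdd i j
  simp only [fill, res]
  split_ifs <;> omega

lemma ext0_antitone (n : ℕ) (lam : Fin n → ℕ) (hlam : Antitone lam) : Antitone (ext0 n lam) := by
  intro a b hab
  unfold ext0
  split_ifs with h1 h2
  · exact hlam hab
  · omega
  · omega
  · omega

lemma bijOn_res (n : ℕ) (lam : Fin (n + 1) → ℕ) (hlam : Antitone lam) :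
    Set.BijOn (res n) {T | Tab (n + 1) (ext0 (n + 1) lam) T}
      (⋃ mu ∈ (↑(Fintype.piFinset
        (fun i : Fin n => Finset.Icc (lam i.succ) (lam i.castSucc))) : Set (Fin n → ℕ)),
        {T | Tab n (ext0 n mu) T}) := by
  have hL := ext0_antitone _ lam hlam
  refine Set.InvOn.bijOn (f' := fill n (ext0 (n + 1) lam)) ⟨?_, ?_⟩ ?_ ?_
  · intro T hT
    exact fill_res hT
  · intro T hT
    simp only [Set.mem_iUnion] at hT
    obtain ⟨mu, _, hT⟩ := hT
    exact res_fill hT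
  · intro T hT
    obtain ⟨M, m0, m1, m2, hM⟩ := res_tab hT hL
    simp only [Set.mem_iUnion]
    refine ⟨fun i => M i, ?_, ?_⟩
    · rw [Finset.mem_coe, Fintype.mem_piFinset]
      intro i
      rw [Finset.mem_Icc]
      have e1 := m1 i
      have e2 := m2 i
      rw [ext0, dif_pos (by omega)] at e1 e2
      exact ⟨e2, e1⟩
    · have : ext0 n (fun i => M i) = M := by
        funext i
        unfold ext0
        split_ifs with h
        · rfl
        · exact (m0 i (by omega)).symm
      rw [this]; exact hM
  · intro T hT
    simp only [Set.mem_iUnion] at hT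
    obtain ⟨mu, hmu, hT⟩ := hT
    rw [Finset.mem_coe, Fintype.mem_piFinset] at hmu
    refine fill_tab hT hL ?_ ?_
    · intro i
      unfold ext0
      split_ifs with h1 h2
      · exact (Finset.mem_Icc.1 (hmu ⟨i, h1⟩)).2
      · omega
      · omega
      · omega
    · intro i
      unfold ext0
      split_ifs with h1 h2 h2
      · exact (Finset.mem_Icc.1 (hmu ⟨i, h2⟩)).1
      · omega
      · omega
      · omega

lemma tab_inj (n : ℕ) (mu nu : Fin n → ℕ) (T : ℕ → ℕ → ℕ) (h1 : Tab n (ext0 n mu) T)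
    (h2 : Tab n (ext0 n nu) T) : mu = nu := by
  funext i
  have h : ∀ j, j < mu i ↔ j < nu i := by
    intro j
    have := (h1.supp i j).symm.trans (h2.supp i j)
    simpa [ext0] using this
  have a := h (mu i)
  have b := h (nu i)
  omega

lemma count (n : ℕ) : ∀ lam : Fin n → ℕ, Antitone lam →
    {T | Tab n (ext0 n lam) T}.Finite ∧
    (({T | Tab n (ext0 n lam) T}.ncard : ℕ) : ℤ) = (binMat n (fun i => (i : ℤ) - lam i)).det := by
  induction n with
  | zero =>
    intro lam _
    have : {T | Tab 0 (ext0 0 lam) T} = {fun _ _ => 0} := by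
      ext T
      simp only [Set.mem_ofPred_eq, Set.mem_singleton_iff]
      constructor
      · intro h
        funext i j
        have := h.bdd i j
        omega
      · rintro rfl
        refine ⟨?_, ?_, ?_, ?_⟩ <;> simp [ext0]
    rw [this]
    simp
  | succ n ih =>
    intro lam hlam
    have hb := bijOn_res n lam hlam
    have hanti : ∀ mu ∈ (↑(Fintype.piFinset
        (fun i : Fin n => Finset.Icc (lam i.succ) (lam i.castSucc))) : Set (Fin n → ℕ)),
        Antitone mu := by
      intro mu hmu
      rw [Finset.mem_coe, Fintype.mem_piFinset] at hmu
      intro a b hab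
      rcases hab.eq_or_lt with rfl | hab
      · exact le_rfl
      · have x1 := (Finset.mem_Icc.1 (hmu a)).1
        have x2 := (Finset.mem_Icc.1 (hmu b)).2
        have : a.succ ≤ b.castSucc := by
          rw [Fin.le_def]; simp; omega
        exact x2.trans ((hlam this).trans x1)
    have hfin := fun mu hmu => (ih mu (hanti mu hmu)).1
    have hU := Set.Finite.biUnion (Finset.finite_toSet _) hfin
    have hdisj : (↑(Fintype.piFinset
        (fun i : Fin n => Finset.Icc (lam i.succ) (lam i.castSucc))) :
        Set (Fin n → ℕ)).PairwiseDisjoint (fun mu => {T | Tab n (ext0 n mu) T}) := by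
      intro mu _ nu _ hne
      rw [Function.onFun, Set.disjoint_left]
      intro T h1 h2
      exact hne (tab_inj n mu nu T h1 h2)
    refine ⟨(hb.finite_iff_finite).2 hU, ?_⟩
    have hc : {T | Tab (n + 1) (ext0 (n + 1) lam) T}.ncard = _ :=
      hb.injOn.ncard_image.symm
    rw [hc, hb.image_eq, Set.Finite.ncard_biUnion (Finset.finite_toSet _) hfin hdisj,
      finsum_mem_coe_finset, ← sum_det n lam hlam]
    push_cast
    exact Finset.sum_congr rfl fun mu hmu => (ih mu (hanti mu hmu)).2

end SSYTCount

/-- The number of semistandard Young tableaux of shape `λ` with entries in `{1, …, n}`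
equals `∏_{i < j} (λ_i − λ_j + j − i)/(j − i)` (Weyl dimension formula). -/
theorem ssyt_count_eq_weyl_product (n : ℕ) (hn : 1 ≤ n) (lam : Fin n → ℕ)
    (hlam : Antitone lam) :
    (Set.ncard {T : ℕ → ℕ → ℕ | IsSSYT n lam T} : ℚ) =
      ∏ p ∈ Finset.univ.filter (fun p : Fin n × Fin n => p.1 < p.2),
        ((lam p.1 : ℚ) - (lam p.2 : ℚ) + (p.2.1 : ℚ) - (p.1.1 : ℚ)) /
          ((p.2.1 : ℚ) - (p.1.1 : ℚ)) := by
  rw [SSYTCount.weyl_eq, ← (SSYTCount.count n lam hlam).2]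
  simp only [SSYTCount.isSSYT_iff n lam hlam]
  push_cast
  rfl
end

section
/- Let n ≥ 1 and let λ = (λ_1 ≥ … ≥ λ_n ≥ 0) be a partition with integer parts. Then for every integer k ≥ 0, the number of integer lattice points in the dilate k·GT(λ) equals the product over all pairs 1 ≤ i < j ≤ n of (k(λ_i − λ_j) + j − i)/(j − i). In particular, the Ehrhart counting function of GT(λ) is a polynomial in k with non-negative coefficients. -/
/-- The Gelfand–Tsetlin polytope `GT(lam)` realized as a set of functions
`x : ℕ → ℕ → ℝ`: the meaningful coordinates are `x i j` for `1 ≤ j ≤ i ≤ n`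
(row `i` has entries `x i 1, …, x i i`), all other values vanish, the interlacing
inequalities `x (i+1) j ≥ x i j` and `x i j ≥ x (i+1) (j+1)` hold, and the top row
is `x n j = lam j`. -/
def GTSet (n : ℕ) (lam : Fin n → ℝ) : Set (ℕ → ℕ → ℝ) :=
  {x | (∀ i j, x i j ≠ 0 → 1 ≤ j ∧ j ≤ i ∧ i ≤ n) ∧
    (∀ i j, 1 ≤ j → j ≤ i → i + 1 ≤ n → x i j ≤ x (i + 1) j ∧ x (i + 1) (j + 1) ≤ x i j) ∧
    (∀ j : Fin n, x n (j.1 + 1) = lam j)}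

/-- The set of integer lattice points of the `k`-th dilate `k · GT(lam)`. -/
def gtLatticePoints (n : ℕ) (lam : Fin n → ℕ) (k : ℕ) : Set (ℕ → ℕ → ℝ) :=
  {x ∈ (fun y : ℕ → ℕ → ℝ => (k : ℝ) • y) '' GTSet n (fun j => (lam j : ℝ)) |
    ∀ i j : ℕ, ∃ m : ℤ, x i j = (m : ℝ)}

namespace GTAux

open Finset

/-- The matrix of binomial coefficients `C(a_i, c)`. -/
noncomputable def chooseMat {n : ℕ} (a : Fin n → ℤ) : Matrix (Fin n) (Fin n) ℤ :=
  Matrix.of fun i c => Ring.choose (a i) (c : ℕ)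

lemma sum_choose (c : ℕ) (u v : ℤ) (h : u ≤ v) :
    ∑ b ∈ Finset.Ico u v, Ring.choose b c = Ring.choose v (c + 1) - Ring.choose u (c + 1) := by
  induction v, h using Int.leInduction with
  | base => simp
  | succ v hv ih =>
    have : Finset.Ico u (v + 1) = insert v (Finset.Ico u v) := by
      ext x; simp only [Finset.mem_Ico, Finset.mem_insert]; omega
    rw [this, Finset.sum_insert (by simp), ih, Ring.choose_succ_succ]
    ring

lemma det_chooseMat_succ {n : ℕ} (a : Fin (n + 1) → ℤ) :
    (chooseMat a).det = (Matrix.of fun (i c : Fin n) =>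
      Ring.choose (a i.succ) ((c : ℕ) + 1) - Ring.choose (a i.castSucc) ((c : ℕ) + 1)).det := by
  let B : Matrix (Fin (n + 1)) (Fin (n + 1)) ℤ := Matrix.of fun i c =>
    Fin.cases (Ring.choose (a 0) (c : ℕ))
      (fun i => Ring.choose (a i.succ) (c : ℕ) - Ring.choose (a i.castSucc) (c : ℕ)) i
  have h : (chooseMat a).det = B.det := by
    apply Matrix.det_eq_of_forall_row_eq_smul_add_pred (fun _ => 1)
    · intro j; simp [chooseMat, B]
    · intro i j; simp [chooseMat, B]
  rw [h, Matrix.det_succ_column_zero, Fin.sum_univ_succ]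
  have h0 : ∀ i : Fin n, B i.succ 0 = 0 := by intro i; simp [B]
  simp only [h0]
  simp [B]
  congr 1

lemma sum_det {n : ℕ} (a : Fin (n + 1) → ℤ) (ha : StrictMono a) :
    ∑ b ∈ Fintype.piFinset (fun j : Fin n => Finset.Ico (a j.castSucc) (a j.succ)),
      (chooseMat b).det = (chooseMat a).det := by
  rw [det_chooseMat_succ]
  have key := (Matrix.detRowAlternating (n := Fin n) (R := ℤ)).toMultilinearMap.map_sum_finset
    (fun (_ : Fin n) (b : ℤ) => fun c : Fin n => Ring.choose b (c : ℕ))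
    (fun j : Fin n => Finset.Ico (a j.castSucc) (a j.succ))
  have e : (fun j : Fin n => ∑ b ∈ Finset.Ico (a j.castSucc) (a j.succ),
      (fun c : Fin n => Ring.choose b (c : ℕ))) = (Matrix.of fun (i c : Fin n) =>
      Ring.choose (a i.succ) ((c : ℕ) + 1) - Ring.choose (a i.castSucc) ((c : ℕ) + 1)) := by
    ext j c
    rw [Finset.sum_apply, sum_choose _ _ _ (ha Fin.castSucc_lt_succ).le]
    rfl
  rw [e] at key
  exact key.symm

lemma det_vand {n : ℕ} (a : Fin n → ℤ) :
    (Matrix.vandermonde a).det = (∏ c : Fin n, ((c : ℕ).factorial : ℤ)) * (chooseMat a).det := by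
  rw [Matrix.det_eval_matrixOfPolynomials_eq_det_vandermonde a
      (fun i => descPochhammer ℤ i)
      (fun i => descPochhammer_natDegree ℤ i)
      (fun i => monic_descPochhammer ℤ i), ← Matrix.det_mul_row]
  congr 1
  ext i c
  have := Ring.descPochhammer_eq_factorial_smul_choose (a i) (c : ℕ)
  rw [← Polynomial.eval_eq_smeval, nsmul_eq_mul] at this
  exact this

lemma det_choose_id (n : ℕ) : (chooseMat (fun i : Fin n => ((i : ℕ) : ℤ))).det = 1 := by
  rw [Matrix.det_of_isLowerTriangular]
  · simp [chooseMat, Ring.choose_natCast]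
  · intro i j h
    simp only [chooseMat, Matrix.of_apply, Ring.choose_natCast]
    norm_cast
    exact Nat.choose_eq_zero_of_lt (by simpa using h)

lemma prod_pairs {n : ℕ} {R : Type*} [CommRing R] (f : Fin n → Fin n → R) :
    ∏ p ∈ Finset.univ.filter (fun p : Fin n × Fin n => p.1 < p.2), f p.1 p.2 =
      ∏ i : Fin n, ∏ j ∈ Finset.Ioi i, f i j := by
  rw [Finset.prod_filter, ← Finset.univ_product_univ, Finset.prod_product]
  refine Finset.prod_congr rfl fun i _ => ?_
  rw [← Finset.prod_filter]
  refine Finset.prod_congr ?_ fun _ _ => rfl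
  ext j; simp

lemma det_eq_prod {n : ℕ} (a : Fin n → ℤ) :
    ((chooseMat a).det : ℚ) =
      ∏ p ∈ Finset.univ.filter (fun p : Fin n × Fin n => p.1 < p.2),
        ((a p.2 : ℚ) - (a p.1 : ℚ)) / ((p.2.1 : ℚ) - (p.1.1 : ℚ)) := by
  rw [Finset.prod_div_distrib]
  have h1 := det_vand a
  have h2 := det_vand (fun i : Fin n => ((i : ℕ) : ℤ))
  rw [det_choose_id, mul_one, Matrix.det_vandermonde, ← prod_pairs] at h2
  rw [← h2, Matrix.det_vandermonde, ← prod_pairs] at h1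
  rw [eq_div_iff]
  · have := congrArg (fun z : ℤ => (z : ℚ)) h1
    simp only [Int.cast_mul, Int.cast_prod, Int.cast_sub, Int.cast_natCast] at this
    rw [this, mul_comm]
  · rw [Finset.prod_ne_zero_iff]
    intro p hp
    have : p.1.1 < p.2.1 := by simpa using hp
    have : (p.1.1 : ℚ) < p.2.1 := by exact_mod_cast this
    linarith

/-- Integral GT patterns with top row `j - a j`. -/
def T (n : ℕ) (a : Fin n → ℤ) : Set (ℕ → ℕ → ℝ) :=
  {x ∈ GTSet n (fun j => ((j.1 : ℝ) - (a j : ℝ))) | ∀ i j : ℕ, ∃ m : ℤ, x i j = (m : ℝ)}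

/-- Add a new top row. -/
noncomputable def addRow (n : ℕ) (a : Fin (n + 1) → ℤ) (y : ℕ → ℕ → ℝ) : ℕ → ℕ → ℝ :=
  fun i j => if i = n + 1 then
    (if h : 1 ≤ j ∧ j ≤ n + 1 then
      (((j - 1 : ℕ) : ℝ) - (a ⟨j - 1, by omega⟩ : ℝ)) else 0) else y i j

lemma T_row_zero {n : ℕ} {a : Fin n → ℤ} {x : ℕ → ℕ → ℝ} (hx : x ∈ T n a) (j : ℕ) :
    x (n + 1) j = 0 := by
  by_contra h
  have := hx.1.1 _ _ h
  omega

lemma addRow_injOn {n : ℕ} (a : Fin (n + 1) → ℤ) (b : Fin n → ℤ) : Set.InjOn (addRow n a) (T n b) := by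
  intro x hx y hy h
  funext i j
  by_cases hi : i = n + 1
  · subst hi; rw [T_row_zero hx, T_row_zero hy]
  · have := congrFun (congrFun h i) j
    simpa [addRow, hi] using this

lemma T_succ {n : ℕ} (a : Fin (n + 1) → ℤ) (x : ℕ → ℕ → ℝ) :
    x ∈ T (n + 1) a ↔
      ∃ b ∈ Fintype.piFinset (fun j : Fin n => Finset.Ico (a j.castSucc) (a j.succ)),
        ∃ y ∈ T n b, addRow n a y = x := by
  constructor
  · rintro ⟨⟨h1, h2, h3⟩, h4⟩
    choose m hm using h4
    refine ⟨fun j => (j.1 : ℤ) - m n (j.1 + 1), ?_,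
      fun i j => if i = n + 1 then 0 else x i j, ⟨⟨?_, ?_, ?_⟩, ?_⟩, ?_⟩
    · rw [Fintype.mem_piFinset]
      intro j
      have h := h2 n (j.1 + 1) (by omega) (by omega) (by omega)
      have e1 := h3 j.castSucc
      have e2 := h3 j.succ
      simp only [Fin.val_castSucc, Fin.val_succ] at e1 e2
      rw [e1, e2, hm n (j.1 + 1)] at h
      obtain ⟨ha, hb⟩ := h
      have ha' : m n (j.1 + 1) ≤ (j.1 : ℤ) - a j.castSucc := by exact_mod_cast ha
      have hb' : ((j.1 + 1 : ℕ) : ℤ) - a j.succ ≤ m n (j.1 + 1) := by exact_mod_cast hb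
      rw [Finset.mem_Ico]
      push_cast at hb'
      constructor <;> linarith
    · intro i j h
      by_cases hi : i = n + 1
      · simp [hi] at h
      · simp only [hi, if_false] at h
        have := h1 i j h
        omega
    · intro i j hj hji hi
      have e1 : i ≠ n + 1 := by omega
      have e2 : i + 1 ≠ n + 1 := by omega
      simp only [e1, e2, if_false]
      exact h2 i j hj hji (by omega)
    · intro j
      simp [hm n (j.1 + 1)]
    · intro i j
      by_cases hi : i = n + 1
      · exact ⟨0, by simp [hi]⟩
      · exact ⟨m i j, by simp [hi, hm]⟩
    · funext i j
      by_cases hi : i = n + 1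
      · subst hi
        simp only [addRow, if_true]
        split_ifs with h
        · have := h3 ⟨j - 1, by omega⟩
          simp only [Nat.sub_add_cancel h.1] at this
          exact this.symm
        · by_contra h'
          have := h1 _ _ (Ne.symm h')
          omega
      · simp [addRow, hi]
  · rintro ⟨b, hb, y, ⟨⟨h1, h2, h3⟩, h4⟩, rfl⟩
    rw [Fintype.mem_piFinset] at hb
    refine ⟨⟨?_, ?_, ?_⟩, ?_⟩
    · intro i j h
      by_cases hi : i = n + 1
      · simp only [addRow, hi, if_true] at h
        split_ifs at h with h'
        · omega
        · exact absurd rfl h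
      · simp only [addRow, hi, if_false] at h
        have := h1 i j h
        omega
    · intro i j hj hji hi
      have e1 : i ≠ n + 1 := by omega
      by_cases e2 : i = n
      · subst e2
        have hx := h3 ⟨j - 1, by omega⟩
        simp only [Nat.sub_add_cancel hj] at hx
        have hb' := hb ⟨j - 1, by omega⟩
        rw [Finset.mem_Ico] at hb'
        obtain ⟨k, rfl⟩ : ∃ k, j = k + 1 := ⟨j - 1, by omega⟩
        simp only [Fin.castSucc_mk, Fin.succ_mk, Nat.add_sub_cancel] at hb' hx
        obtain ⟨p, q⟩ := hb'
        have q' : b ⟨k, by omega⟩ + 1 ≤ a ⟨k + 1, by omega⟩ := q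
        have p' : ((a ⟨k, by omega⟩ : ℤ) : ℝ) ≤ b ⟨k, by omega⟩ := by exact_mod_cast p
        have q'' : ((b ⟨k, by omega⟩ : ℤ) : ℝ) + 1 ≤ a ⟨k + 1, by omega⟩ := by exact_mod_cast q'
        have c1 : 1 ≤ k + 1 ∧ k + 1 ≤ i + 1 := by omega
        have c2 : 1 ≤ k + 1 + 1 ∧ k + 1 + 1 ≤ i + 1 := by omega
        simp only [addRow, e1, if_true, if_false, c1, c2, and_self, dite_true, Nat.add_sub_cancel, hx]
        push_cast
        constructor <;> linarith
      · have e3 : i + 1 ≠ n + 1 := by omega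
        simp only [addRow, e1, e3, if_false]
        exact h2 i j hj hji (by omega)
    · intro j
      have c : 1 ≤ j.1 + 1 ∧ j.1 + 1 ≤ n + 1 := by omega
      simp [addRow, c]
    · intro i j
      by_cases hi : i = n + 1
      · simp only [addRow, hi, if_true]
        split_ifs with h
        · exact ⟨((j - 1 : ℕ) : ℤ) - a ⟨j - 1, by omega⟩, by push_cast; rfl⟩
        · exact ⟨0, by simp⟩
      · simpa [addRow, hi] using h4 i j

lemma strictMono_of_mem {n : ℕ} (a : Fin (n + 1) → ℤ) (b : Fin n → ℤ)
    (ha : StrictMono a)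
    (hb : b ∈ Fintype.piFinset (fun j : Fin n => Finset.Ico (a j.castSucc) (a j.succ))) :
    StrictMono b := by
  rw [Fintype.mem_piFinset] at hb
  intro i j hij
  have h1 := Finset.mem_Ico.1 (hb i)
  have h2 := Finset.mem_Ico.1 (hb j)
  have h3 : a i.succ ≤ a j.castSucc := ha.monotone (by
    rw [Fin.le_def]; simpa using hij)
  omega

open Classical in
lemma count (n : ℕ) : ∀ a : Fin n → ℤ, StrictMono a →
    ∃ s : Finset (ℕ → ℕ → ℝ), (∀ x, x ∈ s ↔ x ∈ T n a) ∧ (s.card : ℤ) = (chooseMat a).det := by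
  induction n with
  | zero =>
    intro a _
    refine ⟨{0}, fun x => ?_, by simp⟩
    rw [Finset.mem_singleton]
    constructor
    · rintro rfl
      refine ⟨⟨?_, ?_, ?_⟩, ?_⟩
      · intro i j h; exact absurd rfl h
      · intro i j _ _ h; omega
      · intro j; exact j.elim0
      · intro i j; exact ⟨0, by simp⟩
    · intro hx
      funext i j
      by_contra h
      have := hx.1.1 _ _ h
      omega
  | succ n ih =>
    intro a ha
    choose! s hs hc using ih
    let P := Fintype.piFinset (fun j : Fin n => Finset.Ico (a j.castSucc) (a j.succ))
    have hP : ∀ b ∈ P, StrictMono b := fun b hb => strictMono_of_mem a b ha hb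
    refine ⟨P.biUnion fun b => (s b).image (addRow n a), fun x => ?_, ?_⟩
    · rw [T_succ]
      simp only [Finset.mem_biUnion, Finset.mem_image]
      constructor
      · rintro ⟨b, hb, y, hy, h⟩
        exact ⟨b, hb, y, (hs b (hP b hb) y).1 hy, h⟩
      · rintro ⟨b, hb, y, hy, h⟩
        exact ⟨b, hb, y, (hs b (hP b hb) y).2 hy, h⟩
    · rw [Finset.card_biUnion, ← sum_det a ha]
      · push_cast
        refine Finset.sum_congr rfl fun b hb => ?_
        rw [Finset.card_image_of_injOn, hc b (hP b hb)]
        intro x hx y hy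
        exact addRow_injOn a b ((hs b (hP b hb) x).1 hx) ((hs b (hP b hb) y).1 hy)
      · intro b hb b' hb' hne
        rw [Function.onFun, Finset.disjoint_left]
        intro x hx hx'
        obtain ⟨y, hy, rfl⟩ := Finset.mem_image.1 hx
        obtain ⟨y', hy', h⟩ := Finset.mem_image.1 hx'
        apply hne
        funext j
        have e1 := ((hs b (hP b hb) y).1 hy).1.2.2 j
        have e2 := ((hs b' (hP b' hb') y').1 hy').1.2.2 j
        have e3 := congrFun (congrFun h n) (j.1 + 1)
        have : n ≠ n + 1 := by omega
        simp only [addRow, this, if_false] at e3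
        rw [e1, e2] at e3
        have : (b j : ℝ) = b' j := by linarith
        exact_mod_cast this

lemma ncard_T {n : ℕ} (a : Fin n → ℤ) (ha : StrictMono a) :
    ((T n a).ncard : ℚ) = ((chooseMat a).det : ℚ) := by
  obtain ⟨s, hs, hc⟩ := count n a ha
  have : T n a = ↑s := by ext x; simp [hs]
  rw [this, Set.ncard_coe_finset, ← hc]
  simp

lemma GTSet_nonempty {n : ℕ} (lam : Fin n → ℕ) (hlam : Antitone lam) :
    (GTSet n (fun j => (lam j : ℝ))).Nonempty := by
  refine ⟨fun i j => if h : 1 ≤ j ∧ j ≤ i ∧ i ≤ n then (lam ⟨j - 1, by omega⟩ : ℝ) else 0,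
    ?_, ?_, ?_⟩
  · intro i j h
    by_contra h'
    simp [h'] at h
  · intro i j hj hji hi
    have c1 : 1 ≤ j ∧ j ≤ i ∧ i ≤ n := by omega
    have c2 : 1 ≤ j ∧ j ≤ i + 1 ∧ i + 1 ≤ n := by omega
    have c3 : 1 ≤ j + 1 ∧ j + 1 ≤ i + 1 ∧ i + 1 ≤ n := by omega
    simp only [dif_pos c1, dif_pos c2, dif_pos c3, le_refl, true_and, Nat.cast_le]
    exact hlam (by rw [Fin.mk_le_mk]; omega)
  · intro j
    have c : 1 ≤ j.1 + 1 ∧ j.1 + 1 ≤ n ∧ n ≤ n := by omega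
    simp only [dif_pos c, Nat.add_sub_cancel]

lemma lattice_eq {n : ℕ} (lam : Fin n → ℕ) (hlam : Antitone lam) (k : ℕ) :
    gtLatticePoints n lam k = T n (fun j => (j.1 : ℤ) - k * lam j) := by
  ext x
  refine and_congr_left fun _ => ?_
  constructor
  · rintro ⟨y, ⟨h1, h2, h3⟩, rfl⟩
    refine ⟨?_, ?_, ?_⟩
    · intro i j h
      apply h1
      intro h0
      simp [h0] at h
    · intro i j hj hji hi
      have := h2 i j hj hji hi
      exact ⟨mul_le_mul_of_nonneg_left this.1 (Nat.cast_nonneg k),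
        mul_le_mul_of_nonneg_left this.2 (Nat.cast_nonneg k)⟩
    · intro j
      simp [h3 j]
  · rintro ⟨h1, h2, h3⟩
    rcases Nat.eq_zero_or_pos k with rfl | hk
    · obtain ⟨y, hy⟩ := GTSet_nonempty lam hlam
      refine ⟨y, hy, ?_⟩
      have row : ∀ d i, i + d = n → ∀ j, x i j = 0 := by
        intro d
        induction d with
        | zero =>
          intro i hi j
          by_contra h
          have hh := h1 _ _ h
          obtain rfl : i = n := by omega
          have := h3 ⟨j - 1, by omega⟩
          simp only [Nat.sub_add_cancel hh.1] at this
          apply h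
          rw [this]; simp
        | succ d ih =>
          intro i hi j
          by_contra h
          have hh := h1 _ _ h
          have := h2 i j hh.1 hh.2.1 (by omega)
          rw [ih (i + 1) (by omega) j, ih (i + 1) (by omega) (j + 1)] at this
          exact h (le_antisymm this.1 this.2)
      funext i j
      have : x i j = 0 := by
        by_contra h
        have hh := h1 _ _ h
        exact h (row (n - i) i (by omega) j)
      simp [this]
    · have hk' : (0 : ℝ) < k := by exact_mod_cast hk
      refine ⟨(k : ℝ)⁻¹ • x, ⟨?_, ?_, ?_⟩, ?_⟩
      · intro i j h
        apply h1
        intro h0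
        simp [h0] at h
      · intro i j hj hji hi
        have := h2 i j hj hji hi
        have hi' := (inv_pos.2 hk').le
        exact ⟨mul_le_mul_of_nonneg_left this.1 hi', mul_le_mul_of_nonneg_left this.2 hi'⟩
      · intro j
        simp [h3 j, hk'.ne']
      · exact smul_inv_smul₀ hk'.ne' x

lemma main {n : ℕ} (lam : Fin n → ℕ) (hlam : Antitone lam) (k : ℕ) :
    (Set.ncard (gtLatticePoints n lam k) : ℚ) =
      ∏ p ∈ Finset.univ.filter (fun p : Fin n × Fin n => p.1 < p.2),
        ((k : ℚ) * ((lam p.1 : ℚ) - (lam p.2 : ℚ)) + (p.2.1 : ℚ) - (p.1.1 : ℚ)) /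
          ((p.2.1 : ℚ) - (p.1.1 : ℚ)) := by
  rw [lattice_eq lam hlam, ncard_T, det_eq_prod]
  · refine Finset.prod_congr rfl fun p _ => ?_
    push_cast
    congr 1
    ring
  · intro i j hij
    have h1 : (i.1 : ℤ) < j.1 := by exact_mod_cast hij
    have h2 : ((k * lam j : ℕ) : ℤ) ≤ ((k * lam i : ℕ) : ℤ) := by
      exact_mod_cast Nat.mul_le_mul_left k (hlam hij.le)
    push_cast at h2
    show (i.1 : ℤ) - k * lam i < j.1 - k * lam j
    linarith

lemma coeff_prod_nonneg {ι : Type*} (s : Finset ι) (f : ι → Polynomial ℚ)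
    (h : ∀ i ∈ s, ∀ m, 0 ≤ (f i).coeff m) : ∀ m, 0 ≤ (∏ i ∈ s, f i).coeff m := by
  refine Finset.prod_induction f (fun q => ∀ m, 0 ≤ q.coeff m) ?_ ?_ h
  · intro p q hp hq m
    rw [Polynomial.coeff_mul]
    exact Finset.sum_nonneg fun x _ => mul_nonneg (hp _) (hq _)
  · intro m
    rw [Polynomial.coeff_one]
    split_ifs <;> norm_num

end GTAux

/-- For every `k ≥ 0`, the number of lattice points of `k · GT(λ)` equals
`∏_{i<j} (k(λ_i − λ_j) + j − i)/(j − i)`; in particular the Ehrhart counting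
function of `GT(λ)` is a polynomial in `k` with non-negative coefficients. -/
theorem gtSet_ehrhart (n : ℕ) (hn : 1 ≤ n) (lam : Fin n → ℕ) (hlam : Antitone lam) :
    (∀ k : ℕ,
      (Set.ncard (gtLatticePoints n lam k) : ℚ) =
        ∏ p ∈ Finset.univ.filter (fun p : Fin n × Fin n => p.1 < p.2),
          ((k : ℚ) * ((lam p.1 : ℚ) - (lam p.2 : ℚ)) + (p.2.1 : ℚ) - (p.1.1 : ℚ)) /
            ((p.2.1 : ℚ) - (p.1.1 : ℚ))) ∧
    ∃ p : Polynomial ℚ, (∀ i : ℕ, 0 ≤ p.coeff i) ∧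
      ∀ k : ℕ, p.eval (k : ℚ) = (Set.ncard (gtLatticePoints n lam k) : ℚ) := by
  refine ⟨fun k => GTAux.main lam hlam k,
    ∏ p ∈ Finset.univ.filter (fun p : Fin n × Fin n => p.1 < p.2),
      (Polynomial.C (((lam p.1 : ℚ) - (lam p.2 : ℚ)) / ((p.2.1 : ℚ) - (p.1.1 : ℚ))) *
        Polynomial.X + Polynomial.C 1), ?_, ?_⟩
  · apply GTAux.coeff_prod_nonneg
    intro p hp m
    have hlt : p.1 < p.2 := by simpa using hp
    have h1 : (p.1.1 : ℚ) < p.2.1 := by exact_mod_cast hlt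
    have h2 : (lam p.2 : ℚ) ≤ lam p.1 := by exact_mod_cast hlam hlt.le
    have h3 : 0 ≤ ((lam p.1 : ℚ) - (lam p.2 : ℚ)) / ((p.2.1 : ℚ) - (p.1.1 : ℚ)) :=
      div_nonneg (by linarith) (by linarith)
    rw [Polynomial.coeff_add, Polynomial.coeff_C_mul, Polynomial.coeff_X, Polynomial.coeff_C]
    refine add_nonneg (mul_nonneg h3 ?_) ?_ <;> split_ifs <;> norm_num
  · intro k
    rw [GTAux.main lam hlam k, Polynomial.eval_prod]
    refine Finset.prod_congr rfl fun p hp => ?_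
    have hlt : p.1 < p.2 := by simpa using hp
    have h1 : (p.1.1 : ℚ) < p.2.1 := by exact_mod_cast hlt
    have h2 : (p.2.1 : ℚ) - p.1.1 ≠ 0 := by linarith
    simp only [Polynomial.eval_add, Polynomial.eval_mul, Polynomial.eval_C, Polynomial.eval_X]
    field_simp
    ring
end

section
/- Let λ and μ be integer partitions of the same size with at most n parts. Then there exists a polynomial p ∈ ℚ[x] such that for every positive integer k, the stretched Kostka coefficient K_{kλ, kμ} — the number of semistandard Young tableaux of shape kλ with entries in {1,…,n} having exactly kμ_i entries equal to i for each i — equals p(k). In particular, the lattice-point counting function of the rational polytope GT(λ, μ) is a genuine polynomial in k, not merely a quasipolynomial. -/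
/-- The number of entries of the tableau `T` of shape `lam` equal to `v`. -/
def contentCount (n : ℕ) (lam : Fin n → ℕ) (T : ℕ → ℕ → ℕ) (v : ℕ) : ℕ :=
  ∑ i : Fin n, ((Finset.range (lam i)).filter (fun j => T i.1 j = v)).card


namespace KostkaAux

set_option linter.unusedSectionVars false

open HahnSeries

section Hahn

variable {Γ : Type} [AddCommGroup Γ] [LinearOrder Γ] [IsOrderedAddMonoid Γ]

/-- Geometric series coefficients in the Hahn series field. -/
theorem geom_coeff {α : Γ} (hα : 0 < α) (d : ℕ) :
    (∀ c : ℕ, (((1 - single α (1 : ℚ))⁻¹ : HahnSeries Γ ℚ) ^ (d + 1)).coeff (c • α)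
      = (Nat.choose (d + c) d : ℚ)) ∧
    (∀ γ : Γ, (∀ c : ℕ, γ ≠ c • α) →
      (((1 - single α (1 : ℚ))⁻¹ : HahnSeries Γ ℚ) ^ (d + 1)).coeff γ = 0) := by
  have hinj : StrictMono (fun c : ℕ => c • α) := nsmul_left_strictMono hα
  let f : ℕ →+ Γ := (AddMonoidHom.flip (AddMonoidHom.mk' (fun c : ℕ =>
    (nsmulAddMonoidHom c : Γ →+ Γ)) (by intro a b; ext x; simp [add_nsmul]))) α
  have hf : ∀ c, f c = c • α := fun c => rfl
  have hfi : Function.Injective f := hinj.injective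
  have hfle : ∀ g g' : ℕ, f g ≤ f g' ↔ g ≤ g' := fun g g' => hinj.le_iff_le
  let Φ : PowerSeries ℚ →+* HahnSeries Γ ℚ :=
    (embDomainRingHom f hfi hfle).comp (toPowerSeries (R := ℚ)).symm.toRingHom
  have hΦ1 : ∀ (p : PowerSeries ℚ) (c : ℕ), (Φ p).coeff (c • α) = PowerSeries.coeff c p := by
    intro p c
    have := embDomain_coeff (f := ⟨⟨f, hfi⟩, hfle _ _⟩) (x := (toPowerSeries (R := ℚ)).symm p)
      (a := c)
    exact this
  have hΦ2 : ∀ (p : PowerSeries ℚ) (γ : Γ), (∀ c : ℕ, γ ≠ c • α) → (Φ p).coeff γ = 0 := by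
    intro p γ hγ
    apply embDomain_of_notMem_range
    rintro ⟨c, hc⟩
    exact hγ c hc.symm
  have hX : Φ PowerSeries.X = single α (1 : ℚ) := by
    ext γ
    by_cases h : ∃ c : ℕ, γ = c • α
    · obtain ⟨c, rfl⟩ := h
      rw [hΦ1, PowerSeries.coeff_X]
      by_cases hc : c = 1
      · subst hc; simp
      · rw [if_neg hc, coeff_single_of_ne]
        intro h
        apply hc
        apply hinj.injective
        simpa using h
    · push Not at h
      rw [hΦ2 _ _ h, coeff_single_of_ne]
      intro h'
      exact h 1 (by simpa using h')
  have hinv : (1 - single α (1 : ℚ))⁻¹ = Φ (PowerSeries.mk 1) := by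
    rw [← hX, ← map_one Φ, ← map_sub]
    symm
    apply eq_inv_of_mul_eq_one_left
    rw [← map_mul, PowerSeries.mk_one_mul_one_sub_eq_one, map_one]
  rw [hinv, ← map_pow, PowerSeries.mk_one_pow_eq_mk_choose_add]
  refine ⟨fun c => ?_, fun γ hγ => hΦ2 _ _ hγ⟩
  rw [hΦ1]; simp

/-- Coefficients along every ray are polynomial in the positive multiple. -/
def Good (g : HahnSeries Γ ℚ) : Prop :=
  ∀ v : Γ, ∃ p : Polynomial ℚ, ∀ k : ℕ, 0 < k → p.eval (k : ℚ) = g.coeff (k • v)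

theorem Good.add {g h : HahnSeries Γ ℚ} (hg : Good g) (hh : Good h) : Good (g + h) := by
  intro v
  obtain ⟨p, hp⟩ := hg v
  obtain ⟨q, hq⟩ := hh v
  exact ⟨p + q, fun k hk => by simp [hp k hk, hq k hk]⟩

theorem good_zero : Good (0 : HahnSeries Γ ℚ) := fun _ => ⟨0, fun k _ => by simp⟩

theorem good_int (z : ℤ) : Good (z : HahnSeries Γ ℚ) := by
  intro v
  by_cases hv : v = 0
  · subst hv
    refine ⟨Polynomial.C (z : ℚ), fun k _ => ?_⟩
    rw [← single_zero_intCast]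
    simp
  · refine ⟨0, fun k hk => ?_⟩
    rw [← single_zero_intCast, coeff_single_of_ne]
    · simp
    · intro h
      rcases (smul_eq_zero.1 h) with h | h
      · omega
      · exact hv h

theorem choose_poly (d a : ℕ) : ∃ p : Polynomial ℚ, ∀ k : ℕ,
    p.eval (k : ℚ) = (Nat.choose (d + k * a) d : ℚ) := by
  refine ⟨Polynomial.C ((d.factorial : ℚ)⁻¹) *
    (ascPochhammer ℚ d).comp (Polynomial.C (a : ℚ) * Polynomial.X + 1), fun k => ?_⟩
  have h1 := Nat.ascFactorial_eq_factorial_mul_choose (k * a) d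
  have h2 := ascPochhammer_nat_eq_ascFactorial (k * a + 1) d
  have h3 : (ascPochhammer ℚ d).eval ((k * a + 1 : ℕ) : ℚ) =
      ((d.factorial * (k * a + d).choose d : ℕ) : ℚ) := by
    rw [← h1, ← h2, ascPochhammer_eval_cast]
  simp only [Polynomial.eval_mul, Polynomial.eval_C, Polynomial.eval_comp, Polynomial.eval_add,
    Polynomial.eval_X, Polynomial.eval_one]
  rw [show ((a : ℚ) * k + 1) = ((k * a + 1 : ℕ) : ℚ) by push_cast; ring, h3, add_comm d]
  have : (d.factorial : ℚ) ≠ 0 := by positivity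
  push_cast
  field_simp

theorem good_mul {α : Γ} (hα : 0 < α) (φ : Γ →+ ℤ) (hφ : φ α = 1) (g : HahnSeries Γ ℚ)
    (hg : Good g) (hs : ∀ v, φ v ≠ 0 → g.coeff v = 0) (m : ℕ) :
    Good (((1 - single α (1 : ℚ))⁻¹ : HahnSeries Γ ℚ) ^ m * g) := by
  cases m with
  | zero => simpa using hg
  | succ d =>
    obtain ⟨h1, h2⟩ := geom_coeff hα d
    set A : HahnSeries Γ ℚ := ((1 - single α (1 : ℚ))⁻¹ : HahnSeries Γ ℚ) ^ (d + 1)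
    have hmem : ∀ (v : Γ) (ij : Γ × Γ), ij.1 + ij.2 = v → A.coeff ij.1 ≠ 0 → g.coeff ij.2 ≠ 0 →
        ∃ c : ℕ, φ v = c ∧ ij.1 = c • α := by
      intro v ij hv ha hb
      have : ∃ c : ℕ, ij.1 = c • α := by
        by_contra hcon
        push Not at hcon
        exact ha (h2 _ hcon)
      obtain ⟨c, hc⟩ := this
      refine ⟨c, ?_, hc⟩
      have h0 : φ ij.2 = 0 := by
        by_contra h; exact hb (hs _ h)
      rw [← hv, map_add, h0, hc, map_nsmul, hφ]; simp
    have hneg : ∀ v, φ v < 0 → (A * g).coeff v = 0 := by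
      intro v hv
      rw [coeff_mul]
      apply Finset.sum_eq_zero
      intro ij hij
      rw [Finset.mem_antidiagonal] at hij
      obtain ⟨c, hc, -⟩ := hmem v ij hij.2.2 hij.1 hij.2.1
      omega
    have hpos : ∀ v (c : ℕ), φ v = c → (A * g).coeff v =
        (Nat.choose (d + c) d : ℚ) * g.coeff (v - c • α) := by
      intro v c hc
      rw [coeff_mul, ← h1]
      rw [Finset.sum_eq_single (c • α, v - c • α)]
      · intro ij hij hne
        exfalso
        rw [Finset.mem_antidiagonal] at hij
        obtain ⟨c', hc', h'⟩ := hmem v ij hij.2.2 hij.1 hij.2.1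
        apply hne
        have : c = c' := by omega
        subst this
        ext
        · exact h'
        · rw [← hij.2.2, h']; simp
      · intro hnot
        rw [Finset.mem_antidiagonal] at hnot
        by_contra hne
        apply hnot
        refine ⟨left_ne_zero_of_mul hne, right_ne_zero_of_mul hne, by simp⟩
    intro v
    rcases lt_or_ge (φ v) 0 with hv | hv
    · refine ⟨0, fun k hk => ?_⟩
      rw [hneg]
      · simp
      · rw [map_nsmul]
        have : (0 : ℤ) < k := by exact_mod_cast hk
        simpa using mul_neg_of_pos_of_neg this hv
    · obtain ⟨a, ha⟩ := Int.eq_ofNat_of_zero_le hv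
      obtain ⟨p, hp⟩ := hg (v - a • α)
      obtain ⟨q, hq⟩ := choose_poly d a
      refine ⟨q * p, fun k hk => ?_⟩
      rw [hpos (k • v) (k * a) (by rw [map_nsmul, ha]; simp), Polynomial.eval_mul, hp k hk, hq,
        nsmul_sub, mul_nsmul']

/-- The Hahn series supported on the kernel of a homomorphism form a subring. -/
def suppKer (φ : Γ →+ ℤ) : Subring (HahnSeries Γ ℚ) where
  carrier := {g | ∀ v, φ v ≠ 0 → g.coeff v = 0}
  zero_mem' := by intro v _; simp
  one_mem' := by
    intro v hv
    rw [← single_zero_one, coeff_single_of_ne]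
    rintro rfl
    simp at hv
  add_mem' := by
    intro a b ha hb v hv
    simp [ha v hv, hb v hv]
  neg_mem' := by
    intro a ha v hv
    simp [ha v hv]
  mul_mem' := by
    intro a b ha hb v hv
    rw [coeff_mul]
    apply Finset.sum_eq_zero
    intro ij hij
    rw [Finset.mem_antidiagonal] at hij
    by_cases h : φ ij.1 = 0
    · rw [hb, mul_zero]
      intro h'
      apply hv
      rw [← hij.2.2, map_add, h, h', add_zero]
    · rw [ha _ h, zero_mul]

theorem geom_mem_suppKer {α : Γ} (hα : 0 < α) (φ : Γ →+ ℤ) (hφ : φ α = 0) :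
    ((1 - single α (1 : ℚ))⁻¹ : HahnSeries Γ ℚ) ∈ suppKer φ := by
  intro v hv
  have := (geom_coeff hα 0).2 v (by rintro c rfl; simp [hφ] at hv)
  simpa using this

variable {n : ℕ} (e : Fin n → Γ)

/-- The basic rational functions. -/
noncomputable def AA (a b : Fin n) : HahnSeries Γ ℚ := (1 - single (e a - e b) (1 : ℚ))⁻¹

/-- The subring generated by the basic rational functions with indices at least `i`. -/
noncomputable def RR (i : ℕ) : Subring (HahnSeries Γ ℚ) :=
  Subring.closure {g | ∃ a b : Fin n, i ≤ a.1 ∧ a < b ∧ g = AA e a b}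

theorem one_sub_single_ne {α : Γ} (hα : α ≠ 0) : (1 - single α (1 : ℚ) : HahnSeries Γ ℚ) ≠ 0 := by
  intro h
  have := congrArg (fun g => g.coeff α) h
  simp only [coeff_sub, coeff_single_same, coeff_zero] at this
  rw [← single_zero_one, coeff_single_of_ne hα] at this
  norm_num at this

theorem AA_symm (he : StrictAnti e) {a b : Fin n} (hab : a ≠ b) : AA e a b = 1 - AA e b a := by
  unfold AA
  have h1 : (1 - single (e a - e b) (1 : ℚ) : HahnSeries Γ ℚ) ≠ 0 :=
    one_sub_single_ne (sub_ne_zero.2 (he.injective.ne hab))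
  have h2 : (1 - single (e b - e a) (1 : ℚ) : HahnSeries Γ ℚ) ≠ 0 :=
    one_sub_single_ne (sub_ne_zero.2 (he.injective.ne hab.symm))
  have h3 : single (e a - e b) (1 : ℚ) * single (e b - e a) (1 : ℚ) = (1 : HahnSeries Γ ℚ) := by
    rw [single_mul_single]; simp
  field_simp
  linear_combination -h3

theorem AA_mem (he : StrictAnti e) {i : ℕ} {a b : Fin n} (ha : i ≤ a.1) (hb : i ≤ b.1)
    (hab : a ≠ b) : AA e a b ∈ RR e i := by
  rcases lt_or_gt_of_ne hab with h | h
  · exact Subring.subset_closure ⟨a, b, ha, h, rfl⟩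
  · rw [AA_symm e he hab]
    exact sub_mem (one_mem _) (Subring.subset_closure ⟨b, a, hb, h, rfl⟩)

theorem AA_mul (he : StrictAnti e) {i j l : Fin n} (hij : i ≠ j) (hil : i ≠ l) (hjl : j ≠ l) :
    AA e i j * AA e i l = AA e i j * AA e j l + AA e i l * (1 - AA e j l) := by
  unfold AA
  have h1 : (1 - single (e i - e j) (1 : ℚ) : HahnSeries Γ ℚ) ≠ 0 :=
    one_sub_single_ne (sub_ne_zero.2 (he.injective.ne hij))
  have h2 : (1 - single (e i - e l) (1 : ℚ) : HahnSeries Γ ℚ) ≠ 0 :=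
    one_sub_single_ne (sub_ne_zero.2 (he.injective.ne hil))
  have h3 : (1 - single (e j - e l) (1 : ℚ) : HahnSeries Γ ℚ) ≠ 0 :=
    one_sub_single_ne (sub_ne_zero.2 (he.injective.ne hjl))
  have h4 : single (e i - e j) (1 : ℚ) * single (e j - e l) (1 : ℚ) =
      (single (e i - e l) 1 : HahnSeries Γ ℚ) := by
    rw [single_mul_single]; simp
  field_simp
  linear_combination -h4

/-- Elements with only one edge out of node `i`. -/
noncomputable def MM (i : Fin n) : AddSubmonoid (HahnSeries Γ ℚ) :=
  AddSubmonoid.closure {g | ∃ r ∈ RR e (i.1 + 1), g = r ∨ ∃ (j : Fin n) (m : ℕ), i < j ∧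
    g = AA e i j ^ m * r}

theorem MM_mul_aux (he : StrictAnti e) (i j l : Fin n) (hij : i < j) (hil : i < l) :
    ∀ (N m m' : ℕ), m + m' = N → ∀ r ∈ RR e (i.1 + 1),
      AA e i j ^ m * AA e i l ^ m' * r ∈ MM e i := by
  intro N
  induction N with
  | zero =>
    intro m m' h r hr
    obtain ⟨rfl, rfl⟩ : m = 0 ∧ m' = 0 := by omega
    exact AddSubmonoid.subset_closure ⟨r, hr, Or.inl (by simp)⟩
  | succ N ih =>
    intro m m' h r hr
    by_cases hjl : j = l
    · subst hjl
      rw [← _root_.pow_add]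
      exact AddSubmonoid.subset_closure ⟨r, hr, Or.inr ⟨j, _, hij, rfl⟩⟩
    · rcases m with _ | m
      · exact AddSubmonoid.subset_closure ⟨r, hr, Or.inr ⟨l, m', hil, by simp⟩⟩
      rcases m' with _ | m'
      · exact AddSubmonoid.subset_closure ⟨r, hr, Or.inr ⟨j, m + 1, hij, by simp⟩⟩
      have hB : AA e j l ∈ RR e (i.1 + 1) := AA_mem e he hij hil hjl
      have key : AA e i j ^ (m + 1) * AA e i l ^ (m' + 1) * r =
          AA e i j ^ (m + 1) * AA e i l ^ m' * (AA e j l * r) +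
          AA e i j ^ m * AA e i l ^ (m' + 1) * ((1 - AA e j l) * r) := by
        have := AA_mul e he hij.ne hil.ne hjl
        linear_combination (AA e i j ^ m * AA e i l ^ m' * r) * this
      rw [key]
      exact add_mem (ih _ _ (by omega) _ (mul_mem hB hr))
        (ih _ _ (by omega) _ (mul_mem (sub_mem (one_mem _) hB) hr))

theorem MM_mul (he : StrictAnti e) (i : Fin n) {x y : HahnSeries Γ ℚ} (hx : x ∈ MM e i)
    (hy : y ∈ MM e i) : x * y ∈ MM e i := by
  induction hx using AddSubmonoid.closure_induction with
  | zero => simp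
  | add a b _ _ ha hb => rw [add_mul]; exact add_mem ha hb
  | mem x hx =>
    induction hy using AddSubmonoid.closure_induction with
    | zero => simp
    | add a b _ _ ha hb => rw [mul_add]; exact add_mem ha hb
    | mem y hy =>
      obtain ⟨r, hr, rfl | ⟨j, m, hj, rfl⟩⟩ := hx
      · obtain ⟨r', hr', rfl | ⟨j', m', hj', rfl⟩⟩ := hy
        · exact AddSubmonoid.subset_closure ⟨_, mul_mem hr hr', Or.inl rfl⟩
        · exact AddSubmonoid.subset_closure ⟨_, mul_mem hr hr', Or.inr ⟨j', m', hj', by ring⟩⟩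
      · obtain ⟨r', hr', rfl | ⟨j', m', hj', rfl⟩⟩ := hy
        · exact AddSubmonoid.subset_closure ⟨_, mul_mem hr hr', Or.inr ⟨j, m, hj, by ring⟩⟩
        · have := MM_mul_aux e he i j j' hj hj' _ m m' rfl _ (mul_mem hr hr')
          convert this using 1
          ring

theorem RR_le_MM (he : StrictAnti e) (i : Fin n) {x : HahnSeries Γ ℚ} (hx : x ∈ RR e i.1) :
    x ∈ MM e i := by
  have hsub : ∀ r ∈ RR e (i.1 + 1), r ∈ MM e i := fun r hr =>
    AddSubmonoid.subset_closure ⟨r, hr, Or.inl rfl⟩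
  induction hx using Subring.closure_induction with
  | zero => exact zero_mem _
  | one => exact hsub _ (one_mem _)
  | add a b _ _ ha hb => exact add_mem ha hb
  | mul a b _ _ ha hb => exact MM_mul e he i ha hb
  | neg a _ ha =>
    have := MM_mul e he i (hsub _ (neg_mem (one_mem _))) ha
    simpa using this
  | mem x hx =>
    obtain ⟨a, b, ha, hab, rfl⟩ := hx
    by_cases h : i = a
    · subst h
      exact AddSubmonoid.subset_closure ⟨1, one_mem _, Or.inr ⟨b, 1, hab, by simp⟩⟩
    · exact hsub _ (Subring.subset_closure ⟨a, b, by
        have : i.1 ≠ a.1 := fun h' => h (Fin.ext h')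
        omega, hab, rfl⟩)

theorem RR_good (he : StrictAnti e) (φ : Fin n → Γ →+ ℤ)
    (hφ : ∀ i j, φ i (e j) = if i = j then 1 else 0) :
    ∀ (t i : ℕ), i + t = n → ∀ g ∈ RR e i, Good g := by
  intro t
  induction t with
  | zero =>
    intro i hi g hg
    have : ∃ z : ℤ, (z : HahnSeries Γ ℚ) = g := by
      induction hg using Subring.closure_induction with
      | zero => exact ⟨0, by simp⟩
      | one => exact ⟨1, by simp⟩
      | add a b _ _ ha hb =>
        obtain ⟨x, rfl⟩ := ha
        obtain ⟨y, rfl⟩ := hb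
        exact ⟨x + y, by simp⟩
      | mul a b _ _ ha hb =>
        obtain ⟨x, rfl⟩ := ha
        obtain ⟨y, rfl⟩ := hb
        exact ⟨x * y, by simp⟩
      | neg a _ ha =>
        obtain ⟨x, rfl⟩ := ha
        exact ⟨-x, by simp⟩
      | mem x hx =>
        obtain ⟨a, b, ha, hab, rfl⟩ := hx
        have := a.2
        omega
    obtain ⟨z, rfl⟩ := this
    exact good_int z
  | succ t ih =>
    intro i hi g hg
    have hin : i < n := by omega
    have hM := RR_le_MM e he ⟨i, hin⟩ hg
    clear hg
    have ih' := ih (i + 1) (by omega)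
    induction hM using AddSubmonoid.closure_induction with
    | zero => exact good_zero
    | add a b _ _ ha hb => exact ha.add hb
    | mem x hx =>
      obtain ⟨r, hr, rfl | ⟨j, m, hj, rfl⟩⟩ := hx
      · exact ih' _ hr
      · have hsupp : RR e (i + 1) ≤ suppKer (φ ⟨i, hin⟩) := by
          apply Subring.closure_le.2
          rintro _ ⟨a, b, ha, hab, rfl⟩
          have hab' : a.1 < b.1 := hab
          apply geom_mem_suppKer (sub_pos.2 (he hab))
          rw [map_sub, hφ, hφ, if_neg, if_neg]
          · rfl
          · intro h; have := congrArg Fin.val h; simp at this; omega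
          · intro h; have := congrArg Fin.val h; simp at this; omega
        refine good_mul (sub_pos.2 (he hj)) (φ ⟨i, hin⟩) ?_ r (ih' _ hr) (hsupp hr) m
        rw [map_sub, hφ, hφ, if_pos rfl, if_neg hj.ne, sub_zero]

end Hahn
end KostkaAux

namespace KostkaAux

section Det

/-- Interlacing sequences. -/
def interl {n : ℕ} (κ : Fin (n + 1) → ℕ) : Finset (Fin n → ℕ) :=
  Fintype.piFinset fun i => Finset.Icc (κ i.castSucc) (κ i.succ)

/-- Schur polynomials by the branching rule (increasing convention). -/
def SS {K : Type} [CommRing K] : (n : ℕ) → (Fin n → K) → (Fin n → ℕ) → K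
  | 0, _, _ => 1
  | n + 1, x, κ => ∑ ν ∈ interl κ,
      x 0 ^ (∑ i, κ i - ∑ i, ν i) * SS n (fun i => x i.succ) ν

/-- The alternant matrix. -/
def DD {K : Type} [CommRing K] {n : ℕ} (x : Fin n → K) (κ : Fin n → ℕ) : Matrix (Fin n) (Fin n) K :=
  Matrix.of fun r j => x j ^ (κ r + r.1)

theorem geom_icc {K : Type} [CommRing K] (x y : K) (a b r : ℕ) (hab : a ≤ b) :
    x ^ (b + (r + 1)) - y ^ (b - a + 1) * x ^ (a + r) =
      (x - y) * ∑ ν ∈ Finset.Icc a b, y ^ (b - ν) * x ^ (ν + r) := by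
  obtain ⟨d, rfl⟩ := Nat.exists_eq_add_of_le hab
  have h := (Commute.all x y).mul_geom_sum₂ (d + 1)
  have : ∑ ν ∈ Finset.Icc a (a + d), y ^ (a + d - ν) * x ^ (ν + r) =
      x ^ (a + r) * ∑ i ∈ Finset.range (d + 1), x ^ i * y ^ (d + 1 - 1 - i) := by
    rw [← Finset.Ico_add_one_right_eq_Icc, Finset.sum_Ico_eq_sum_range, Finset.mul_sum]
    rw [show a + d + 1 - a = d + 1 by omega]
    apply Finset.sum_congr rfl
    intro i hi
    rw [Finset.mem_range] at hi
    rw [show a + d - (a + i) = d + 1 - 1 - i by omega]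
    ring
  rw [this, show a + d - a + 1 = d + 1 by omega]
  linear_combination (-x ^ (a + r)) * h

theorem det_step {K : Type} [CommRing K] {n : ℕ} (x : Fin (n + 1) → K) (κ : Fin (n + 1) → ℕ)
    (hκ : Monotone κ) :
    (DD x κ).det = (∏ j : Fin n, (x j.succ - x 0)) *
      ∑ ν ∈ interl κ, x 0 ^ (∑ i, κ i - ∑ i, ν i) * (DD (fun i => x i.succ) ν).det := by
  let B : Matrix (Fin (n + 1)) (Fin (n + 1)) K := Matrix.of fun r j =>
    Fin.cases (x j ^ κ 0) (fun r' => (x j - x 0) *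
      ∑ ν ∈ Finset.Icc (κ r'.castSucc) (κ r'.succ), x 0 ^ (κ r'.succ - ν) * x j ^ (ν + r'.1)) r
  have h1 : (DD x κ).det = B.det := by
    apply Matrix.det_eq_of_forall_row_eq_smul_add_pred
      (fun i => x 0 ^ (κ i.succ - κ i.castSucc + 1))
    · intro j; simp [DD, B]
    · intro i j
      have := geom_icc (x j) (x 0) (κ i.castSucc) (κ i.succ) i.1 (hκ (Fin.castSucc_le_succ i))
      simp only [DD, B, Matrix.of_apply, Fin.cases_succ, Fin.val_succ, Fin.val_castSucc]
      rw [← this]; ring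
  rw [h1, Matrix.det_succ_column_zero, Fin.sum_univ_succ, Finset.sum_eq_zero (s := Finset.univ)]
  swap
  · intro i _
    simp [B]
  have h2 : B.submatrix (Fin.succAbove 0) Fin.succ = Matrix.of fun i j =>
      (x j.succ - x 0) * (Matrix.of (fun (i j : Fin n) => ∑ ν ∈ Finset.Icc (κ i.castSucc) (κ i.succ),
        x 0 ^ (κ i.succ - ν) * x j.succ ^ (ν + i.1))) i j := by
    ext i j
    simp [B]
  rw [h2, Matrix.det_mul_row]
  have h3 : (Matrix.of (fun (i j : Fin n) => ∑ ν ∈ Finset.Icc (κ i.castSucc) (κ i.succ),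
        x 0 ^ (κ i.succ - ν) * x j.succ ^ (ν + i.1))).det =
      ∑ ν ∈ interl κ, (∏ i : Fin n, x 0 ^ (κ i.succ - ν i)) * (DD (fun i => x i.succ) ν).det := by
    have := (Matrix.detRowAlternating (n := Fin n) (R := K)).toMultilinearMap.map_sum_finset
      (fun i (ν : ℕ) => fun j : Fin n => x 0 ^ (κ i.succ - ν) * x j.succ ^ (ν + i.1))
      (fun i => Finset.Icc (κ i.castSucc) (κ i.succ))
    have e1 : (Matrix.of (fun (i j : Fin n) => ∑ ν ∈ Finset.Icc (κ i.castSucc) (κ i.succ),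
        x 0 ^ (κ i.succ - ν) * x j.succ ^ (ν + i.1))) = fun i => ∑ ν ∈ Finset.Icc (κ i.castSucc) (κ i.succ),
          fun j : Fin n => x 0 ^ (κ i.succ - ν) * x j.succ ^ (ν + i.1) := by
      ext i j; simp
    rw [e1]
    refine this.trans ?_
    apply Finset.sum_congr rfl
    intro ν _
    exact Matrix.det_mul_column (fun i => x 0 ^ (κ i.succ - ν i)) (DD (fun i => x i.succ) ν)
  rw [h3]
  have h4 : ∀ ν ∈ interl κ, x 0 ^ (∑ i, κ i - ∑ i, ν i) =
      x 0 ^ κ 0 * ∏ i : Fin n, x 0 ^ (κ i.succ - ν i) := by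
    intro ν hν
    have hν' : ∀ i, ν i ≤ κ i.succ := fun i => by
      have := Fintype.mem_piFinset.1 hν i
      exact (Finset.mem_Icc.1 this).2
    rw [Finset.prod_pow_eq_pow_sum, ← pow_add, Fin.sum_univ_succ, Finset.sum_tsub_distrib _ (fun i _ => hν' i)]
    congr 1
    have := Finset.sum_le_sum (s := Finset.univ) (fun i _ => hν' i)
    omega
  simp only [B, Matrix.of_apply, Fin.cases_zero, Fin.val_zero, pow_zero, one_mul, add_zero]
  simp only [Finset.mul_sum]
  apply Finset.sum_congr rfl
  intro ν hν
  rw [h4 ν hν]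
  ring

theorem interl_mono {n : ℕ} {κ : Fin (n + 1) → ℕ} {ν : Fin n → ℕ} (hν : ν ∈ interl κ) :
    Monotone ν := by
  have h : ∀ i, κ i.castSucc ≤ ν i ∧ ν i ≤ κ i.succ := fun i =>
    Finset.mem_Icc.1 (Fintype.mem_piFinset.1 hν i)
  cases n with
  | zero => intro i; exact i.elim0
  | succ n =>
    rw [Fin.monotone_iff_le_succ]
    intro i
    refine (h _).2.trans (le_trans (le_of_eq ?_) (h _).1)
    rw [Fin.succ_castSucc]

theorem weyl {K : Type} [CommRing K] : ∀ (n : ℕ) (x : Fin n → K) (κ : Fin n → ℕ), Monotone κ →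
    (DD x κ).det = (∏ i : Fin n, ∏ j ∈ Finset.Ioi i, (x j - x i)) * SS n x κ := by
  intro n
  induction n with
  | zero => intro x κ _; simp [SS]
  | succ n ih =>
    intro x κ hκ
    rw [det_step x κ hκ, SS, Fin.prod_univ_succ, Finset.mul_sum, Finset.mul_sum]
    apply Finset.sum_congr rfl
    intro ν hν
    rw [ih _ ν (interl_mono hν), Fin.prod_Ioi_zero]
    simp only [Fin.prod_Ioi_succ]
    ring

/-- Weyl's formula in its symmetrised form. -/
theorem weyl_sum {K : Type} [Field K] {n : ℕ} (x : Fin n → K) (hx : Function.Injective x)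
    (hx0 : ∀ i, x i ≠ 0) (κ : Fin n → ℕ) (hκ : Monotone κ) :
    SS n x κ = ∑ w : Equiv.Perm (Fin n), (∏ r, x (w r) ^ κ r) *
      ∏ i : Fin n, ∏ j ∈ Finset.Ioi i, (1 - x (w i) / x (w j))⁻¹ := by
  have hV : (∏ i : Fin n, ∏ j ∈ Finset.Ioi i, (x j - x i)) ≠ 0 := by
    rw [← Matrix.det_vandermonde]
    exact Matrix.det_vandermonde_ne_zero_iff.2 hx
  apply mul_left_cancel₀ hV
  rw [← weyl n x κ hκ, ← Matrix.det_transpose, Matrix.det_apply', Finset.mul_sum]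
  apply Finset.sum_congr rfl
  intro w _
  have h1 : (∏ i : Fin n, ∏ j ∈ Finset.Ioi i, (x (w j) - x (w i))) =
      (Equiv.Perm.sign w : ℤ) * ∏ i : Fin n, ∏ j ∈ Finset.Ioi i, (x j - x i) := by
    rw [← Matrix.det_vandermonde, ← Matrix.det_vandermonde x, ← Matrix.det_permute]
    rfl
  have h2 : (∏ i : Fin n, ∏ j ∈ Finset.Ioi i, x (w j)) = ∏ r, x (w r) ^ r.1 := by
    rw [Finset.prod_comm' (t' := Finset.univ) (s' := fun j => Finset.Iio j)]
    · simp
    · simp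
  have h3 : (∏ i : Fin n, ∏ j ∈ Finset.Ioi i, (1 - x (w i) / x (w j))⁻¹) *
      (∏ i : Fin n, ∏ j ∈ Finset.Ioi i, (x (w j) - x (w i))) = ∏ r, x (w r) ^ r.1 := by
    rw [← h2]
    simp only [← Finset.prod_mul_distrib]
    apply Finset.prod_congr rfl
    intro i _
    apply Finset.prod_congr rfl
    intro j hj
    have hij : x (w j) - x (w i) ≠ 0 := by
      rw [sub_ne_zero]
      intro h
      exact (Finset.mem_Ioi.1 hj).ne' (w.injective (hx h))
    have := hx0 (w j)
    field_simp
  have hs : ((Equiv.Perm.sign w : ℤ) : K) * ((Equiv.Perm.sign w : ℤ) : K) = 1 := by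
    rcases Int.units_eq_one_or (Equiv.Perm.sign w) with h | h <;> simp [h]
  have h5 : (∏ i, (DD x κ).transpose (w i) i) = (∏ r, x (w r) ^ κ r) * ∏ r, x (w r) ^ r.1 := by
    rw [← Finset.prod_mul_distrib]
    apply Finset.prod_congr rfl
    intro i _
    simp [DD, pow_add]
  rw [h5, ← h3, h1]
  set V := ∏ i : Fin n, ∏ j ∈ Finset.Ioi i, (x j - x i)
  linear_combination ((∏ r, x (w r) ^ κ r) * V *
    (∏ i : Fin n, ∏ j ∈ Finset.Ioi i, (1 - x (w i) / x (w j))⁻¹)) * hs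

end Det
end KostkaAux
namespace KostkaAux
section Comb

/-- Semistandard tableaux with shape given by a function on `ℕ`. -/
def IsS (n : ℕ) (L : ℕ → ℕ) (T : ℕ → ℕ → ℕ) : Prop :=
  (∀ i j, L i ≤ j → T i j = 0) ∧ (∀ i j, j < L i → 1 ≤ T i j ∧ T i j ≤ n) ∧
  (∀ i j₁ j₂, j₁ ≤ j₂ → j₂ < L i → T i j₁ ≤ T i j₂) ∧
  (∀ i₁ i₂ j, i₁ < i₂ → j < L i₂ → T i₁ j < T i₂ j)

/-- Multiplicity of an entry. -/
def cnt (n : ℕ) (L : ℕ → ℕ) (T : ℕ → ℕ → ℕ) (v : ℕ) : ℕ :=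
  ∑ i ∈ Finset.range n, ((Finset.range (L i)).filter (fun j => T i j = v)).card

/-- Extend a tableau by the new largest entry. -/
def extT (n : ℕ) (L N : ℕ → ℕ) (T : ℕ → ℕ → ℕ) : ℕ → ℕ → ℕ := fun i j =>
  if j < N i then T i j else if j < L i then n + 1 else 0

theorem isS_extT {n : ℕ} {L N : ℕ → ℕ} (hL : Antitone L) (h1 : ∀ i, L (i + 1) ≤ N i)
    (h2 : ∀ i, N i ≤ L i) {T : ℕ → ℕ → ℕ} (hT : IsS n N T) : IsS (n + 1) L (extT n L N T) := by
  obtain ⟨a, b, c, d⟩ := hT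
  refine ⟨?_, ?_, ?_, ?_⟩
  · intro i j hj
    have := h2 i
    simp only [extT]
    rw [if_neg (by omega), if_neg (by omega)]
  · intro i j hj
    have := b i j
    simp only [extT]
    split_ifs <;> omega
  · intro i j₁ j₂ h hj
    have := b i j₁
    have := c i j₁ j₂ h
    simp only [extT]
    split_ifs <;> omega
  · intro i₁ i₂ j h hj
    have e1 : L i₂ ≤ L (i₁ + 1) := hL h
    have e2 := h1 i₁
    have e3 := b i₁ j
    have e4 := d i₁ i₂ j h
    simp only [extT]
    split_ifs <;> omega

theorem shape_extT {n : ℕ} {L N : ℕ → ℕ}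
    (h2 : ∀ i, N i ≤ L i) {T : ℕ → ℕ → ℕ} (hT : IsS n N T) (i : ℕ) :
    ((Finset.range (L i)).filter (fun j => extT n L N T i j ≤ n)).card = N i := by
  have : (Finset.range (L i)).filter (fun j => extT n L N T i j ≤ n) = Finset.range (N i) := by
    ext j
    have e1 := h2 i
    have e2 := hT.2.1 i j
    simp only [Finset.mem_filter, Finset.mem_range]
    simp only [extT]
    split_ifs <;> omega
  rw [this, Finset.card_range]

theorem extT_inj {n : ℕ} {L N : ℕ → ℕ} {T T' : ℕ → ℕ → ℕ} (hT : IsS n N T) (hT' : IsS n N T')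
    (h : extT n L N T = extT n L N T') : T = T' := by
  funext i j
  by_cases hj : j < N i
  · have := congrFun (congrFun h i) j
    simpa [extT, hj] using this
  · rw [hT.1 i j (by omega), hT'.1 i j (by omega)]

theorem cnt_extT_lt {n : ℕ} {L N : ℕ → ℕ} (h2 : ∀ i, N i ≤ L i) (hN : ∀ i, n ≤ i → N i = 0)
    {T : ℕ → ℕ → ℕ} {v : ℕ} (hv : v < n) :
    cnt (n + 1) L (extT n L N T) (v + 1) = cnt n N T (v + 1) := by
  have : ∀ i, (Finset.range (L i)).filter (fun j => extT n L N T i j = v + 1) =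
      (Finset.range (N i)).filter (fun j => T i j = v + 1) := by
    intro i
    ext j
    have e1 := h2 i
    simp only [Finset.mem_filter, Finset.mem_range]
    simp only [extT]
    split_ifs <;> omega
  simp only [cnt, this]
  rw [Finset.sum_range_succ, hN n le_rfl]
  simp

theorem cnt_extT_eq {n : ℕ} {L N : ℕ → ℕ} (h2 : ∀ i, N i ≤ L i) (hN : ∀ i, n ≤ i → N i = 0)
    {T : ℕ → ℕ → ℕ} (hT : IsS n N T) :
    cnt (n + 1) L (extT n L N T) (n + 1) =
      ∑ i ∈ Finset.range (n + 1), L i - ∑ i ∈ Finset.range n, N i := by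
  have : ∀ i, (Finset.range (L i)).filter (fun j => extT n L N T i j = n + 1) =
      Finset.Ico (N i) (L i) := by
    intro i
    ext j
    have e1 := h2 i
    have e2 := hT.2.1 i j
    simp only [Finset.mem_filter, Finset.mem_range, Finset.mem_Ico]
    simp only [extT]
    split_ifs <;> omega
  simp only [cnt, this, Nat.card_Ico]
  rw [Finset.sum_tsub_distrib _ (fun i _ => h2 i), Finset.sum_range_succ N, hN n le_rfl, add_zero]

theorem exists_extT {n : ℕ} {L : ℕ → ℕ} (hL : Antitone L)
    {T : ℕ → ℕ → ℕ} (hT : IsS (n + 1) L T) :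
    ∃ N T', (∀ i, L (i + 1) ≤ N i) ∧ (∀ i, N i ≤ L i) ∧ (∀ i, n ≤ i → N i = 0) ∧
      IsS n N T' ∧ T = extT n L N T' := by
  obtain ⟨a, b, c, d⟩ := hT
  have hex : ∀ i, ∃ m ≤ L i, ∀ j, j < L i → (T i j ≤ n ↔ j < m) := by
    intro i
    by_cases h : ∃ j, j < L i ∧ n < T i j
    · classical
      refine ⟨Nat.find h, (Nat.find_spec h).1.le, fun j hj => ⟨fun hle => ?_, fun hlt => ?_⟩⟩
      · by_contra hcon
        have := c i (Nat.find h) j (by omega) hj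
        have := (Nat.find_spec h).2
        omega
      · have := Nat.find_min h hlt
        by_contra hcon
        exact this ⟨hj, by omega⟩
    · push Not at h
      exact ⟨L i, le_rfl, fun j hj => ⟨fun _ => hj, fun _ => h j hj⟩⟩
  choose N hN1 hN2 using hex
  have hlow : ∀ i j, j < L i → i + 1 ≤ T i j := by
    intro i
    induction i with
    | zero => intro j hj; exact (b 0 j hj).1
    | succ i ih =>
      intro j hj
      have h1 := ih j (lt_of_lt_of_le hj (hL (Nat.le_succ i)))
      have h2 := d i (i + 1) j (Nat.lt_succ_self i) hj
      omega
  have hintl : ∀ i, L (i + 1) ≤ N i := by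
    intro i
    by_contra hcon
    push Not at hcon
    have h0 : N i < L i := lt_of_lt_of_le hcon (hL (Nat.le_succ i))
    have h1 := d i (i + 1) (N i) (Nat.lt_succ_self i) hcon
    have h2 := (b (i + 1) (N i) hcon).2
    have h3 := (hN2 i (N i) h0).1 (by omega)
    omega
  refine ⟨N, fun i j => if j < N i then T i j else 0, hintl, hN1, ?_, ⟨?_, ?_, ?_, ?_⟩, ?_⟩
  · intro i hi
    by_contra hcon
    have h0 : 0 < L i := lt_of_lt_of_le (by omega) (hN1 i)
    have := hlow i 0 h0
    have := (hN2 i 0 h0).2 (by omega)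
    omega
  · intro i j hj
    exact if_neg (by omega)
  · intro i j hj
    have h0 := hN1 i
    simp only [if_pos hj]
    exact ⟨(b i j (by omega)).1, (hN2 i j (by omega)).2 hj⟩
  · intro i j₁ j₂ h hj
    have h0 := hN1 i
    simp only [if_pos hj, if_pos (lt_of_le_of_lt h hj)]
    exact c i j₁ j₂ h (by omega)
  · intro i₁ i₂ j h hj
    have h0 := hN1 i₂
    have h1 : L i₂ ≤ L (i₁ + 1) := hL h
    have h2 := hintl i₁
    simp only [if_pos hj, if_pos (show j < N i₁ by omega)]
    exact d i₁ i₂ j h (by omega)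
  · funext i j
    have h0 := hN1 i
    have h1 := hN2 i j
    have h2 := b i j
    have h3 := a i j
    simp only [extT]
    split_ifs <;> omega

/-- Turn an increasing sequence on `Fin n` into a decreasing one on `ℕ`. -/
def toN {n : ℕ} (κ : Fin n → ℕ) : ℕ → ℕ := fun i => if h : i < n then κ ⟨n - 1 - i, by omega⟩ else 0

theorem toN_rev {n : ℕ} (κ : Fin n → ℕ) : (fun i : Fin n => toN κ (n - 1 - i.1)) = κ := by
  funext i
  have := i.2
  simp only [toN]
  rw [dif_pos (by omega)]
  congr 1
  ext
  simp only
  omega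

theorem toN_inj {n : ℕ} {κ κ' : Fin n → ℕ} (h : toN κ = toN κ') : κ = κ' := by
  rw [← toN_rev κ, ← toN_rev κ', h]

theorem mem_interl_iff {n : ℕ} {L : ℕ → ℕ} (hL0 : ∀ i, n + 1 ≤ i → L i = 0) (κ : Fin n → ℕ) :
    κ ∈ interl (fun i : Fin (n + 1) => L (n + 1 - 1 - i.1)) ↔
      (∀ i, L (i + 1) ≤ toN κ i) ∧ (∀ i, toN κ i ≤ L i) := by
  simp only [interl, Fintype.mem_piFinset, Finset.mem_Icc, Fin.val_castSucc, Fin.val_succ]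
  constructor
  · intro h
    constructor
    · intro i
      by_cases hi : i < n
      · have := (h ⟨n - 1 - i, by omega⟩).1
        simp only [toN, dif_pos hi]
        rwa [show n + 1 - 1 - (n - 1 - i) = i + 1 by omega] at this
      · rw [hL0 _ (by omega)]; exact Nat.zero_le _
    · intro i
      by_cases hi : i < n
      · have := (h ⟨n - 1 - i, by omega⟩).2
        simp only [toN, dif_pos hi]
        rwa [show n + 1 - 1 - (n - 1 - i + 1) = i by omega] at this
      · simp [toN, hi]
  · rintro ⟨h1, h2⟩ i
    have hi := i.2
    have e : toN κ (n - 1 - i.1) = κ i := congrFun (toN_rev κ) i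
    have a1 := h1 (n - 1 - i.1)
    have a2 := h2 (n - 1 - i.1)
    rw [e] at a1 a2
    rw [show n - 1 - i.1 + 1 = n + 1 - 1 - i.1 by omega] at a1
    rw [show n - 1 - i.1 = n + 1 - 1 - (i.1 + 1) by omega] at a2
    exact ⟨a1, a2⟩

theorem sum_rev (n : ℕ) (L : ℕ → ℕ) :
    ∑ i : Fin n, L (n - 1 - i.1) = ∑ i ∈ Finset.range n, L i := by
  rw [Fin.sum_univ_eq_sum_range (fun i => L (n - 1 - i)), Finset.sum_range_reflect]

theorem tableaux_sum {K : Type} [CommRing K] (z : ℕ → K) : ∀ (n : ℕ) (L : ℕ → ℕ), Antitone L →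
    (∀ i, n ≤ i → L i = 0) →
    ∃ F : Finset (ℕ → ℕ → ℕ), (∀ T, T ∈ F ↔ IsS n L T) ∧
      ∑ T ∈ F, ∏ v ∈ Finset.range n, z v ^ cnt n L T (v + 1) =
        SS n (fun i => z (n - 1 - i.1)) (fun i => L (n - 1 - i.1)) := by
  classical
  intro n
  induction n with
  | zero =>
    intro L _ hL0
    refine ⟨{fun _ _ => 0}, fun T => ?_, by simp [SS]⟩
    rw [Finset.mem_singleton]
    constructor
    · rintro rfl
      refine ⟨fun _ _ _ => rfl, ?_, ?_, ?_⟩ <;> intros <;> simp_all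
    · intro h
      funext i j
      exact h.1 i j (by rw [hL0 i (Nat.zero_le _)]; exact Nat.zero_le _)
  | succ n ih =>
    intro L hL hL0
    have ih' : ∀ N : ℕ → ℕ, ∃ F : Finset (ℕ → ℕ → ℕ), Antitone N → (∀ i, n ≤ i → N i = 0) →
      ((∀ T, T ∈ F ↔ IsS n N T) ∧
      ∑ T ∈ F, ∏ v ∈ Finset.range n, z v ^ cnt n N T (v + 1) =
        SS n (fun i => z (n - 1 - i.1)) (fun i => N (n - 1 - i.1))) := by
      intro N
      by_cases h : Antitone N ∧ (∀ i, n ≤ i → N i = 0)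
      · obtain ⟨F, hF⟩ := ih N h.1 h.2
        exact ⟨F, fun _ _ => hF⟩
      · exact ⟨∅, fun h1 h2 => absurd ⟨h1, h2⟩ h⟩
    choose F hF using ih'
    have hmem := mem_interl_iff (n := n) hL0
    have hanti : ∀ N : ℕ → ℕ, (∀ i, L (i + 1) ≤ N i) → (∀ i, N i ≤ L i) → Antitone N :=
      fun N h1 h2 => antitone_nat_of_succ_le fun i => (h2 (i + 1)).trans (h1 i)
    have hz : ∀ (κ : Fin n → ℕ) i, n ≤ i → toN κ i = 0 := by
      intro κ i hi
      simp only [toN]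
      rw [dif_neg (by omega)]
    set I := interl (fun i : Fin (n + 1) => L (n + 1 - 1 - i.1)) with hI
    have hFκ : ∀ κ ∈ I, (∀ T, T ∈ F (toN κ) ↔ IsS n (toN κ) T) ∧
      ∑ T ∈ F (toN κ), ∏ v ∈ Finset.range n, z v ^ cnt n (toN κ) T (v + 1) =
        SS n (fun i => z (n - 1 - i.1)) κ := by
      intro κ hκ
      obtain ⟨h1, h2⟩ := (hmem κ).1 hκ
      have := hF (toN κ) (hanti _ h1 h2) (hz κ)
      rwa [toN_rev] at this
    refine ⟨I.biUnion fun κ => (F (toN κ)).image (extT n L (toN κ)), fun T => ?_, ?_⟩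
    · rw [Finset.mem_biUnion]
      constructor
      · rintro ⟨κ, hκ, hT⟩
        obtain ⟨T', hT', rfl⟩ := Finset.mem_image.1 hT
        obtain ⟨h1, h2⟩ := (hmem κ).1 hκ
        exact isS_extT hL h1 h2 (((hFκ κ hκ).1 T').1 hT')
      · intro hT
        obtain ⟨N, T', h1, h2, h3, h4, rfl⟩ := exists_extT hL hT
        have hN : N = toN (fun i : Fin n => N (n - 1 - i.1)) := by
          funext i
          simp only [toN]
          split_ifs with h
          · congr 1; omega
          · exact h3 i (by omega)
        refine ⟨fun i : Fin n => N (n - 1 - i.1), (hmem _).2 ⟨by rw [← hN]; exact h1,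
          by rw [← hN]; exact h2⟩, ?_⟩
        have hm : (fun i : Fin n => N (n - 1 - i.1)) ∈ I := (hmem _).2 ⟨by rw [← hN]; exact h1,
          by rw [← hN]; exact h2⟩
        have := (hFκ _ hm).1 T'
        rw [← hN] at this ⊢
        exact Finset.mem_image_of_mem _ (this.2 h4)
    · rw [Finset.sum_biUnion]
      · rw [SS]
        apply Finset.sum_congr rfl
        intro κ hκ
        obtain ⟨h1, h2⟩ := (hmem κ).1 hκ
        obtain ⟨hF1, hF2⟩ := hFκ κ hκ
        rw [Finset.sum_image]
        · have hx : (fun i : Fin n => z (n + 1 - 1 - (i.succ).1)) =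
              fun i : Fin n => z (n - 1 - i.1) := by
            funext i
            congr 1
            simp only [Fin.val_succ]
            omega
          rw [hx, ← hF2, Finset.mul_sum]
          apply Finset.sum_congr rfl
          intro T hT
          rw [Finset.prod_range_succ, cnt_extT_eq h2 (hz κ) ((hF1 T).1 hT), mul_comm]
          have s1 := sum_rev (n + 1) L
          have s2 := sum_rev n (toN κ)
          rw [congrArg (fun f : Fin n → ℕ => ∑ i, f i) (toN_rev κ)] at s2
          rw [s1, s2]
          congr 1
          apply Finset.prod_congr rfl
          intro v hv
          rw [cnt_extT_lt h2 (hz κ) (Finset.mem_range.1 hv)]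
        · intro T hT T' hT' h
          exact extT_inj ((hF1 T).1 hT) ((hF1 T').1 hT') h
      · intro κ hκ κ' hκ' hne
        rw [Function.onFun, Finset.disjoint_left]
        intro T hT hT'
        apply hne
        obtain ⟨S, hS, rfl⟩ := Finset.mem_image.1 hT
        obtain ⟨S', hS', hSS⟩ := Finset.mem_image.1 hT'
        apply toN_inj
        funext i
        rw [← shape_extT ((hmem κ).1 hκ).2 (((hFκ κ hκ).1 S).1 hS) i, ← hSS,
          shape_extT ((hmem κ').1 hκ').2 (((hFκ κ' hκ').1 S').1 hS') i]

/-- Extend a function on `Fin n` by zero. -/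
def ext0 {n : ℕ} (lam : Fin n → ℕ) : ℕ → ℕ := fun i => if h : i < n then lam ⟨i, h⟩ else 0

theorem ext0_val {n : ℕ} (lam : Fin n → ℕ) (i : Fin n) : ext0 lam i.1 = lam i := by
  simp [ext0]

theorem ext0_anti {n : ℕ} {lam : Fin n → ℕ} (h : Antitone lam) : Antitone (ext0 lam) := by
  intro i j hij
  simp only [ext0]
  split_ifs with h1 h2
  · exact h hij
  · omega
  · exact Nat.zero_le _
  · exact le_rfl

theorem isSSYT_iff {n : ℕ} (lam : Fin n → ℕ) (T : ℕ → ℕ → ℕ) :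
    IsSSYT n lam T ↔ IsS n (ext0 lam) T := by
  have key : ∀ i j, j < ext0 lam i ↔ ∃ h : i < n, j < lam ⟨i, h⟩ := by
    intro i j
    simp only [ext0]
    split_ifs with h <;> simp [h]
  constructor
  · rintro ⟨a, b, c, d⟩
    refine ⟨?_, ?_, ?_, ?_⟩
    · intro i j hj
      by_contra hcon
      have := (key i j).2 (a i j hcon)
      omega
    · intro i j hj
      obtain ⟨h, h'⟩ := (key i j).1 hj
      exact b ⟨i, h⟩ j h'
    · intro i j₁ j₂ hj hj₂
      obtain ⟨h, h'⟩ := (key i j₂).1 hj₂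
      exact c ⟨i, h⟩ j₁ j₂ hj h'
    · intro i₁ i₂ j hi hj
      obtain ⟨h, h'⟩ := (key i₂ j).1 hj
      exact d ⟨i₁, hi.trans h⟩ ⟨i₂, h⟩ j hi h'
  · rintro ⟨a, b, c, d⟩
    refine ⟨?_, ?_, ?_, ?_⟩
    · intro i j hj
      rw [← key]
      by_contra hcon
      exact hj (a i j (by omega))
    · intro i j hj
      exact b i j ((key _ _).2 ⟨i.2, hj⟩)
    · intro i j₁ j₂ hj hj₂
      exact c i j₁ j₂ hj ((key _ _).2 ⟨i.2, hj₂⟩)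
    · intro i₁ i₂ j hi hj
      exact d i₁ i₂ j hi ((key _ _).2 ⟨i₂.2, hj⟩)

theorem contentCount_eq {n : ℕ} (lam : Fin n → ℕ) (T : ℕ → ℕ → ℕ) (v : ℕ) :
    contentCount n lam T v = cnt n (ext0 lam) T v := by
  rw [cnt, ← Fin.sum_univ_eq_sum_range
    (fun i => ((Finset.range (ext0 lam i)).filter (fun j => T i j = v)).card)]
  simp only [contentCount, ext0_val]

end Comb
end KostkaAux
namespace KostkaAux
section Final

open HahnSeries

/-- The ordered group of exponents. -/
abbrev GG (n : ℕ) : Type := Lex (Fin n → ℤ)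

/-- Standard basis vectors. -/
def ee {n : ℕ} (i : Fin n) : GG n := toLex (Pi.single i 1)

theorem ee_anti {n : ℕ} : StrictAnti (ee (n := n)) := by
  intro a b hab
  refine ⟨a, ?_, ?_⟩
  · intro j hj
    show (Pi.single b (1 : ℤ) : Fin n → ℤ) j = (Pi.single a (1 : ℤ) : Fin n → ℤ) j
    rw [Pi.single_eq_of_ne (hj.trans hab).ne, Pi.single_eq_of_ne hj.ne]
  · show (Pi.single b (1 : ℤ) : Fin n → ℤ) a < (Pi.single a (1 : ℤ) : Fin n → ℤ) a
    rw [Pi.single_eq_of_ne hab.ne, Pi.single_eq_same]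
    norm_num

/-- Coordinates. -/
def phi {n : ℕ} (i : Fin n) : GG n →+ ℤ where
  toFun v := ofLex v i
  map_zero' := rfl
  map_add' _ _ := rfl

theorem phi_ee {n : ℕ} (i j : Fin n) : phi i (ee j) = if i = j then 1 else 0 := by
  show (Pi.single j (1 : ℤ) : Fin n → ℤ) i = _
  rw [Pi.single_apply]

theorem GG_ext {n : ℕ} {u v : GG n} (h : ∀ i, phi i u = phi i v) : u = v := by
  apply ofLex.injective
  funext i
  exact h i

theorem single_sum {Γ : Type} [AddCommGroup Γ] [LinearOrder Γ] [IsOrderedAddMonoid Γ]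
    {ι : Type} (s : Finset ι) (f : ι → Γ) :
    ∏ i ∈ s, single (f i) (1 : ℚ) = (single (∑ i ∈ s, f i) 1 : HahnSeries Γ ℚ) := by
  classical
  induction s using Finset.induction_on with
  | empty => simp
  | insert a s ha ih => rw [Finset.prod_insert ha, Finset.sum_insert ha, ih, single_mul_single, one_mul]

end Final
end KostkaAux

open KostkaAux HahnSeries

/-- Stretched Kostka coefficients are polynomial in the stretching factor: for
partitions `λ` and `μ` of the same size with at most `n` parts, there is a polynomial
`p ∈ ℚ[x]` whose value at every positive integer `k` is the Kostka coefficient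
`K_{kλ,kμ}`, the number of semistandard Young tableaux of shape `kλ` with entries in
`{1, …, n}` and exactly `kμ_i` entries equal to `i` for each `i`. -/
theorem stretched_kostka_polynomial (n : ℕ) (hn : 1 ≤ n) (lam mu : Fin n → ℕ)
    (hlam : Antitone lam) (hmu : Antitone mu)
    (hsize : ∑ i : Fin n, lam i = ∑ i : Fin n, mu i) :
    ∃ p : Polynomial ℚ, ∀ k : ℕ, 0 < k →
      p.eval (k : ℚ) =
        (Set.ncard {T : ℕ → ℕ → ℕ | IsSSYT n (fun i => k * lam i) T ∧
          ∀ i : Fin n, contentCount n (fun i => k * lam i) T (i.1 + 1) = k * mu i} : ℚ) := by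
  classical
  let x : Fin n → HahnSeries (GG n) ℚ := fun i => single (ee i) 1
  let z : ℕ → HahnSeries (GG n) ℚ := fun v => if h : v < n then x ⟨n - 1 - v, by omega⟩ else 1
  have hzx : (fun i : Fin n => z (n - 1 - i.1)) = x := by
    funext i
    have := i.2
    simp only [z]
    rw [dif_pos (by omega)]
    congr 1
    ext
    simp only
    omega
  let κ : Fin n → ℕ := fun i => ext0 lam (n - 1 - i.1)
  have hκ : Monotone κ := fun i j hij => ext0_anti hlam (by
    have : i.1 ≤ j.1 := hij
    omega)
  let M : GG n := ∑ i : Fin n, ext0 mu (n - 1 - i.1) • ee i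
  let G : Equiv.Perm (Fin n) → HahnSeries (GG n) ℚ := fun w =>
    ∏ i : Fin n, ∏ j ∈ Finset.Ioi i, (1 - x (w i) / x (w j))⁻¹
  have hxdiv : ∀ a b, x a / x b = single (ee a - ee b) 1 := by
    intro a b
    have hb : x b ≠ 0 := by simp [x]
    rw [div_eq_iff hb]
    simp only [x]
    rw [single_mul_single]
    simp
  have hG : ∀ w, Good (G w) := by
    intro w
    apply RR_good ee ee_anti phi phi_ee n 0 (by omega)
    apply prod_mem
    intro i _
    apply prod_mem
    intro j hj
    rw [hxdiv]
    exact AA_mem ee ee_anti (Nat.zero_le _) (Nat.zero_le _)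
      (w.injective.ne (Finset.mem_Ioi.1 hj).ne)
  choose P hP using fun w => hG w (M - ∑ r, κ r • ee (w r))
  refine ⟨∑ w, P w, fun k hk => ?_⟩
  have hkl : Antitone (fun i => k * lam i) := fun i j hij => Nat.mul_le_mul_left k (hlam hij)
  obtain ⟨F, hF1, hF2⟩ := tableaux_sum z n (ext0 (fun i => k * lam i)) (ext0_anti hkl)
    (fun i hi => by simp only [ext0]; rw [dif_neg (by omega)])
  have hscale : ∀ (f : Fin n → ℕ) i, ext0 (fun i => k * f i) i = k * ext0 f i := by
    intro f i
    simp only [ext0]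
    split_ifs <;> simp
  rw [hzx] at hF2
  simp only [hscale] at hF2
  have hmonk : Monotone (fun i => k * κ i) := fun i j hij => Nat.mul_le_mul_left k (hκ hij)
  have hw := weyl_sum x (by
      intro a b hab
      by_contra hne
      have := congrArg (fun g => g.coeff (ee a)) hab
      simp only [x] at this
      rw [coeff_single_same, coeff_single_of_ne (ee_anti.injective.ne hne)] at this
      norm_num at this) (by intro i; simp [x]) _ hmonk
  have hF3 := congrArg (fun g => g.coeff (k • M)) (hF2.trans hw)
  have hprod : ∀ c : ℕ → ℕ, ∏ v ∈ Finset.range n, z v ^ c v =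
      single (∑ i : Fin n, c (n - 1 - i.1) • ee i) 1 := by
    intro c
    rw [← single_sum, ← Finset.prod_range_reflect, ← Fin.prod_univ_eq_prod_range
      (fun j => z (n - 1 - j) ^ c (n - 1 - j))]
    apply Finset.prod_congr rfl
    intro i _
    have this : z (n - 1 - i.1) = x i := congrFun hzx i
    rw [this]
    simp only [x]
    rw [single_pow, one_pow]
  have hphi : ∀ (c : Fin n → ℕ) i, phi i (∑ j : Fin n, c j • ee j) = c i := by
    intro c i
    rw [map_sum]
    simp only [map_nsmul, phi_ee]
    simp
  have hcoef : ∀ c : ℕ → ℕ, (∏ v ∈ Finset.range n, z v ^ c v).coeff (k • M) =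
      if (∀ i : Fin n, c i.1 = k * mu i) then 1 else 0 := by
    intro c
    rw [hprod]
    have key : k • M = ∑ i : Fin n, c (n - 1 - i.1) • ee i ↔ ∀ i : Fin n, c i.1 = k * mu i := by
      refine ⟨?_, ?_⟩
      · intro h i
        have h2 := congrArg (phi (Fin.rev i)) h
        rw [map_nsmul, hphi, hphi (fun i => c (n - 1 - i.1))] at h2
        have h3 : n - 1 - (Fin.rev i).1 = i.1 := by rw [Fin.val_rev]; omega
        rw [h3, ext0_val] at h2
        simp only [nsmul_eq_mul] at h2
        exact_mod_cast h2.symm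
      · intro h
        apply GG_ext
        intro i
        rw [map_nsmul, hphi, hphi (fun i => c (n - 1 - i.1))]
        have h1 := h (Fin.rev i)
        have h3 : n - 1 - i.1 = (Fin.rev i).1 := by rw [Fin.val_rev]; omega
        rw [h3, ext0_val, h1]
        simp
    by_cases h : k • M = ∑ i : Fin n, c (n - 1 - i.1) • ee i
    · rw [if_pos (key.1 h), h, coeff_single_same]
    · rw [if_neg (fun h' => h (key.2 h')), coeff_single_of_ne h]
  have hset : {T : ℕ → ℕ → ℕ | IsSSYT n (fun i => k * lam i) T ∧
          ∀ i : Fin n, contentCount n (fun i => k * lam i) T (i.1 + 1) = k * mu i} =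
      ((F.filter fun T => ∀ i : Fin n, cnt n (ext0 fun i => k * lam i) T (i.1 + 1) = k * mu i :
        Finset (ℕ → ℕ → ℕ)) : Set (ℕ → ℕ → ℕ)) := by
    ext T
    simp only [Set.mem_ofPred_eq, Finset.coe_filter, hF1, isSSYT_iff, contentCount_eq]
  rw [hset, Set.ncard_coe_finset, Finset.card_filter, Polynomial.eval_finsetSum]
  simp only [coeff_sum] at hF3
  push_cast
  rw [Finset.sum_congr rfl fun T _ =>
    hcoef (fun v => cnt n (ext0 fun i => k * lam i) T (v + 1))] at hF3
  rw [hF3]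
  apply Finset.sum_congr rfl
  intro w _
  have hmon : (∏ r, x (w r) ^ (k * κ r)) = single (k • ∑ r, κ r • ee (w r)) 1 := by
    rw [← Finset.sum_nsmul, ← single_sum]
    apply Finset.prod_congr rfl
    intro r _
    simp only [x]
    rw [single_pow, one_pow, mul_nsmul']
  rw [hP w k hk, hmon, nsmul_sub]
  have h := coeff_single_mul_add (r := (1 : ℚ)) (x := G w)
    (a := k • M - k • ∑ r, κ r • ee (w r)) (b := k • ∑ r, κ r • ee (w r))
  rw [sub_add_cancel, one_mul] at h
  exact h.symm
end
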